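/- Let N ≥ 3 with N ≠ 6, and suppose R_N is tiled by triangles all similar to a triangle whose angles α, β, γ are rational multiples of π. Then each interior angle of R_N is packed with at most two tiles: for every vertex V_j of R_N (j = 1,…,N), the numbers p_j, q_j, r_j of angles α, β, γ of tiles meeting at V_j satisfy p_j + q_j + r_j ≤ 2. -/

import Mathlib

/-!
Choose `n`, a multiple of `2N`, such that all angles of the tiles are integral multiples `π a i / n`
of `π / n`. The points are identified with complex numbers, `ω = exp (πi/n)`.

**Boundaries.** Call a function `E x y` of segments line-additive if it is additive along every line.
For such an `E` the sums of `E` over the positively oriented boundaries of the tiles add up to the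
sum over the boundary of the polygon (`tiling_boundary`). No subdivision of the edges is needed: the
equality of the sum of the indicator functions of the tiles with that of the triangles joining the
centre to the sides implies it by a local computation at the end points of the edges (`boundary_relation`).

**Directions.** The area form restricted to segments whose direction is not a multiple of `π / n` is
line-additive. It vanishes on the sides of the polygon, and the sides of one tile are all of this kind
or all not, so the tiles with sides in such directions have total area zero: there are none
(`all_good`).

**Conjugation.** Let `κ` be prime to `2n`. The Galois automorphism `ω ↦ ω ^ κ` extends to an additive
map `Φ` of the plane which maps `τ ω ^ j`, for real `τ`, to `f τ ω ^ (κ j)` (`exists_conjugation`);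
`f` can be chosen not to vanish on the lengths of the sides of the tiles. The map `Φ` sends the tiles
to nondegenerate triangles, all of which are reoriented by the same sign (`image_sign`), and it sends
the polygon to a star polygon. The angle subtended at a fixed vertex `W` of the star polygon is
line-additive along the lines of good direction; the total over the star polygon is `π (1 - 2 {κ/N})`
(`starPolygon_sum`). When `{κ/N} < 1/2` this is positive, and therefore the common sign is positive,
every conjugate tile contributes a nonnegative angle, and a tile with its `i`-th corner at the vertex
contributes `π {κ a i / n}` (`image_corner`). If `c i` tiles have their `i`-th corner at the vertex, then
`∑ i, c i * {κ a i / n} ≤ 1 - 2 {κ/N}` (`conj_vertex_inequality`).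

**Arithmetic.** For `κ = 1` the inequality shows that some `c i` is zero, as the three angles add up
to `π`. If three or more tiles met at the vertex, some `c i` would be at least `2`, and `x = a i / n`
would satisfy `{κ x} + {κ/N} < 1/2` for all `κ` prime to `2n` with `{κ/N} < 1/2`. Taking `κ / N` as
close to `1/2` as possible shows first that the denominator of `x` divides `N` (or `2N`, for odd `N`)
and then that this is impossible unless `N = 6` (`arithmetic_contradiction`).
-/

open Real EuclideanGeometry

noncomputable section

/-- The Euclidean plane. -/
abbrev Pt : Type := EuclideanSpace ℝ (Fin 2)

/-- The `j`-th vertex of the regular `N`-gon inscribed in the unit circle. -/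
noncomputable def ngonVertex (N : ℕ) (j : ℕ) : Pt :=
  (WithLp.equiv 2 (Fin 2 → ℝ)).symm ![Real.cos (2 * π * j / N), Real.sin (2 * π * j / N)]

/-- The regular `N`-gon `R_N`. -/
noncomputable def ngon (N : ℕ) : Set Pt :=
  convexHull ℝ (Set.range fun j : Fin N => ngonVertex N j)

/-- The interior angle `δ_N = (N-2)π/N` of the regular `N`-gon. -/
noncomputable def ngonAngle (N : ℕ) : ℝ := ((N : ℝ) - 2) * π / N

/-- The closed triangular region spanned by the three points `T 0, T 1, T 2`. -/
noncomputable def triRegion (T : Fin 3 → Pt) : Set Pt :=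
  convexHull ℝ (Set.range T)

/-- The angle of the triangle `T` at its `i`-th vertex. -/
noncomputable def angleAt (T : Fin 3 → Pt) (i : Fin 3) : ℝ :=
  EuclideanGeometry.angle (T (i + 1)) (T i) (T (i + 2))

/-- `T` is a tiling of the regular `N`-gon by finitely many nondegenerate triangles:
the tiles have pairwise disjoint interiors and their union is `R_N`. -/
def IsTiling (N : ℕ) {m : ℕ} (T : Fin m → Fin 3 → Pt) : Prop :=
  (∀ t, AffineIndependent ℝ (T t)) ∧
  (Pairwise fun t s => Disjoint (interior (triRegion (T t))) (interior (triRegion (T s)))) ∧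
  (⋃ t, triRegion (T t)) = ngon N

/-- The triangle `T` has angles `α, β, γ` at its vertices `0, 1, 2` (a labeling of its
vertices by the three angles). -/
def HasAngles (T : Fin 3 → Pt) (α β γ : ℝ) : Prop :=
  angleAt T 0 = α ∧ angleAt T 1 = β ∧ angleAt T 2 = γ

/-- The triangle `T` is similar to a triangle with angles `α, β, γ`:
its angles are `α, β, γ` in some order (sizes and orientation are unrestricted). -/
def SimilarTo (T : Fin 3 → Pt) (α β γ : ℝ) : Prop :=
  ∃ σ : Equiv.Perm (Fin 3), HasAngles (fun i => T (σ i)) α β γ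

/-- The number of tiles of the (labeled) tiling `T` whose vertex labeled `i`
lies at the point `V`. -/
noncomputable def countAt {m : ℕ} (T : Fin m → Fin 3 → Pt) (i : Fin 3) (V : Pt) : ℕ :=
  Nat.card {t : Fin m // T t i = V}

/-- The tiling `T`, by triangles similar to the triangle with angles `α, β, γ`, is
regular: one can label the vertices of each tile by the angles `α, β, γ` of the tile
at those vertices so that, for two of the labels, at every point of the plane the
number of tiles having their vertex carrying the first label at that point equals the
number of tiles having their vertex carrying the second label there. -/
def IsRegularTiling {m : ℕ} (T : Fin m → Fin 3 → Pt) (α β γ : ℝ) : Prop :=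
  ∃ L : Fin m → Equiv.Perm (Fin 3),
    (∀ t, HasAngles (fun i => T t (L t i)) α β γ) ∧
    ∃ i j : Fin 3, i ≠ j ∧
      ∀ V : Pt, countAt (fun t i' => T t (L t i')) i V
              = countAt (fun t i' => T t (L t i')) j V


set_option linter.unusedSimpArgs false
set_option linter.unusedVariables false

/-! ### Fractional parts of multiples by units -/

/-- Units of a smaller modulus lift to units of a larger one. -/
lemma exists_coprime_lift {D M : ℕ} (hM : M ≠ 0) (hDM : D ∣ M) {k : ℤ}
    (hk : IsCoprime k (D : ℤ)) : ∃ k' : ℤ, IsCoprime k' (M : ℤ) ∧ (D : ℤ) ∣ k' - k := by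
  have : NeZero M := ⟨hM⟩
  obtain ⟨u, hu⟩ := ZMod.unitsMap_surjective hDM (ZMod.unitOfIsCoprime k hk)
  have hu' : ((u : ZMod M).cast : ZMod D) = (k : ZMod D) := by
    have := congrArg Units.val hu
    simpa [ZMod.unitsMap_def] using this
  refine ⟨((u : ZMod M).val : ℤ), ?_, ?_⟩
  · exact Nat.isCoprime_iff_coprime.2 (ZMod.val_coe_unit_coprime u)
  · rw [← ZMod.intCast_zmod_eq_zero_iff_dvd]
    push_cast
    rw [← hu', ZMod.natCast_val, sub_self]

lemma fract_eq_of_dvd_sub {D : ℕ} {k k' : ℤ} (h : (D : ℤ) ∣ k' - k) {x : ℝ} {w : ℤ}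
    (hx : (D : ℝ) * x = w) : Int.fract ((k' : ℝ) * x) = Int.fract ((k : ℝ) * x) := by
  obtain ⟨z, hz⟩ := h
  rw [Int.fract_eq_fract]
  refine ⟨z * w, ?_⟩
  have : (k' : ℝ) - k = D * z := by exact_mod_cast hz
  push_cast
  rw [← hx]
  linear_combination x * this

lemma fract_eq_of_bounds {x y : ℝ} {z : ℤ} (h : x = y + z) (h0 : 0 ≤ y) (h1 : y < 1) :
    Int.fract x = y := by
  rw [h, Int.fract_add_intCast, Int.fract_eq_self.2 ⟨h0, h1⟩]

/-- If all multiples `kx`, with `k` a unit in a fixed residue class modulo the even number `N'`,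
have fractional part at most `1/4`, then `N'` clears the denominator of `x`: otherwise some prime
`l` divides the index, and the admissible multiples contain two points whose difference
is within `1/6` of `1/2`. -/
lemma int_of_fract_le {n N' : ℕ} (hn : n ≠ 0) (hN' : 2 ∣ N') (hNn : N' ∣ n) {x : ℝ} {w : ℤ}
    (hx : (n : ℝ) * x = w) {k₀ : ℤ} (hk₀ : IsCoprime k₀ (N' : ℤ))
    (H : ∀ k : ℤ, IsCoprime k (n : ℤ) → (N' : ℤ) ∣ k - k₀ → Int.fract ((k : ℝ) * x) ≤ 1 / 4) :
    ∃ z : ℤ, (N' : ℝ) * x = z := by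
  classical
  -- the smallest multiple `D` of `N'` dividing `n` with `D * x` an integer
  have hex : ∃ D : ℕ, 0 < D ∧ N' ∣ D ∧ D ∣ n ∧ ∃ z : ℤ, (D : ℝ) * x = z :=
    ⟨n, Nat.pos_of_ne_zero hn, hNn, dvd_rfl, w, hx⟩
  obtain ⟨hD0, ⟨e, he⟩, hDn, z, hz⟩ := Nat.find_spec hex
  have hmin := fun D' => @Nat.find_min _ _ hex D'
  set D := Nat.find hex with hD
  by_cases he1 : e = 1
  · exact ⟨z, by rw [← hz, he, he1, mul_one]⟩
  exfalso
  obtain ⟨l, hl, e', he'⟩ := Nat.exists_prime_and_dvd he1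
  have hDt : D = l * (N' * e') := by rw [he, he']; ring
  set t := N' * e' with ht
  have ht0 : 0 < t := by
    rcases Nat.eq_zero_or_pos t with h | h
    · rw [h] at hDt; omega
    · exact h
  have hlpos := hl.pos
  have htD : t < D := by rw [hDt]; nlinarith [hl.two_le]
  have hlz : ¬ (l : ℤ) ∣ z := by
    rintro ⟨y, hy⟩
    refine hmin t htD ⟨ht0, ⟨e', ht⟩, dvd_trans ⟨l, by rw [hDt]; ring⟩ hDn, y, ?_⟩
    have : (l : ℝ) * (t * x) = l * y := by
      have h1 : (z : ℝ) = l * y := by exact_mod_cast hy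
      rw [← h1, ← hz, hDt]; push_cast; ring
    exact mul_left_cancel₀ (by exact_mod_cast hlpos.ne') this
  -- `H` only depends on the residue class modulo `D`
  have HD : ∀ k : ℤ, IsCoprime k (D : ℤ) → (N' : ℤ) ∣ k - k₀ →
      Int.fract ((k : ℝ) * x) ≤ 1 / 4 := by
    intro k hk hkk
    obtain ⟨k', hk', hd⟩ := exists_coprime_lift hn hDn hk
    rw [← fract_eq_of_dvd_sub hd hz]
    refine H k' hk' ?_
    have : (N' : ℤ) ∣ k' - k := dvd_trans ⟨e, by exact_mod_cast he⟩ hd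
    simpa using dvd_add this hkk
  obtain ⟨k₁, hk₁, hd₁⟩ := exists_coprime_lift hD0.ne' ⟨e, he⟩ hk₀
  have hx0 := HD k₁ hk₁ hd₁
  have htx : (t : ℝ) * x = z / l := by
    rw [← hz, hDt]; push_cast
    have : (l : ℝ) ≠ 0 := by exact_mod_cast hlpos.ne'
    field_simp
  have hprime : Prime (l : ℤ) := Nat.prime_iff_prime_int.1 hl
  have hk₁l : ¬ (l : ℤ) ∣ k₁ := by
    intro h
    have h2 : IsCoprime (l : ℤ) (l : ℤ) := by
      refine IsCoprime.of_isCoprime_of_dvd_left ?_ h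
      exact hk₁.of_isCoprime_of_dvd_right ⟨t, by exact_mod_cast hDt⟩
    exact hprime.not_isUnit (isCoprime_self.1 h2)
  have hcop : IsCoprime (k₁ * z) (l : ℤ) := by
    rw [isCoprime_comm, hprime.coprime_iff_not_dvd]
    intro h
    rcases hprime.dvd_or_dvd h with h | h
    exacts [hk₁l h, hlz h]
  -- a shift by `i / l` with `1/3 ≤ i / l ≤ 2/3` must not be admissible
  have key : ∀ i : ℤ, (1 : ℝ) / 3 ≤ i / l → (i : ℝ) / l ≤ 2 / 3 →
      ∃ j : ℤ, (l : ℤ) ∣ k₁ * z * j - i ∧ (l : ℤ) ∣ 1 + j * t := by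
    intro i hi1 hi2
    obtain ⟨u, v, huv⟩ := hcop
    refine ⟨u * i, ⟨-(v * i), by linear_combination i * huv⟩, ?_⟩
    set j := u * i with hj
    by_contra hnd
    have hc : IsCoprime (k₁ * (1 + j * t)) (D : ℤ) := by
      refine IsCoprime.mul_left hk₁ ?_
      rw [hDt]; push_cast
      refine IsCoprime.mul_right ?_ ?_
      · rw [isCoprime_comm, hprime.coprime_iff_not_dvd]; exact hnd
      · exact ⟨1, -j, by ring⟩
    have hd : (N' : ℤ) ∣ k₁ * (1 + j * t) - k₀ := by
      have h1 : (N' : ℤ) ∣ k₁ * j * t := Dvd.dvd.mul_left (by exact_mod_cast Dvd.intro _ ht.symm) _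
      have h2 := dvd_add h1 hd₁
      have h3 : k₁ * (1 + j * t) - k₀ = k₁ * j * t + (k₁ - k₀) := by ring
      rwa [h3]
    have h4 := HD _ hc hd
    have hl0 : (l : ℝ) ≠ 0 := by exact_mod_cast hlpos.ne'
    have h5 : ((k₁ * (1 + j * t) : ℤ) : ℝ) * x
        = (Int.fract ((k₁ : ℝ) * x) + i / l) + ((⌊(k₁ : ℝ) * x⌋ - v * i : ℤ) : ℝ) := by
      have h6 : (u : ℝ) * (k₁ * z) + v * l = 1 := by exact_mod_cast huv
      have h7 : (j : ℝ) = u * i := by exact_mod_cast hj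
      have h8 := Int.fract_add_floor ((k₁ : ℝ) * x)
      push_cast
      have h9 : (k₁ : ℝ) * (1 + j * t) * x = k₁ * x + k₁ * j * (t * x) := by ring
      rw [h9, htx, h7]
      have h10 : (k₁ : ℝ) * (u * i) * (z / l) = i / l - v * i := by
        field_simp
        linear_combination (i : ℝ) * h6
      rw [h10]
      linarith
    have h0 := Int.fract_nonneg ((k₁ : ℝ) * x)
    rw [fract_eq_of_bounds h5 (by linarith) (by linarith)] at h4
    linarith
  rcases hl.eq_two_or_odd with h2 | hodd
  · obtain ⟨j, -, h⟩ := key 1 (by rw [h2]; norm_num) (by rw [h2]; norm_num)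
    have h3 : (2 : ℤ) ∣ t := by
      rw [ht]; push_cast
      exact Dvd.dvd.mul_right (by exact_mod_cast hN') _
    rw [h2] at h
    have h4 : (2 : ℤ) ∣ j * t := Dvd.dvd.mul_left h3 j
    push_cast at h
    omega
  · have hl3 : 3 ≤ l := by have := hl.two_le; omega
    obtain ⟨r, hr⟩ : ∃ r, l = 2 * r + 1 := ⟨l / 2, by omega⟩
    have hr1 : (1 : ℝ) ≤ r := by exact_mod_cast (by omega : 1 ≤ r)
    have hlr : (l : ℝ) = 2 * r + 1 := by exact_mod_cast hr
    have hlp : (0 : ℝ) < l := by exact_mod_cast hlpos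
    obtain ⟨j, hj1, hj2⟩ := key r
      (by rw [div_le_div_iff₀ (by norm_num) hlp]; push_cast; linarith)
      (by rw [div_le_div_iff₀ hlp (by norm_num)]; push_cast; linarith)
    obtain ⟨j', hj1', hj2'⟩ := key (r + 1)
      (by rw [div_le_div_iff₀ (by norm_num) hlp]; push_cast; linarith)
      (by rw [div_le_div_iff₀ hlp (by norm_num)]; push_cast; linarith)
    have h3 : (l : ℤ) ∣ (j' - j) * t := by
      have := dvd_sub hj2' hj2
      have h4 : (j' - j) * (t : ℤ) = 1 + j' * t - (1 + j * t) := by ring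
      rwa [h4]
    have h5 : ¬ (l : ℤ) ∣ t := by
      intro h
      have h6 := dvd_sub hj2 (Dvd.dvd.mul_left h j)
      simp only [add_sub_cancel_right] at h6
      exact hprime.not_isUnit (isUnit_of_dvd_one h6)
    have h6 : (l : ℤ) ∣ j' - j := (hprime.dvd_or_dvd h3).resolve_right h5
    have h7 : (l : ℤ) ∣ 1 := by
      have h8 := dvd_add (dvd_sub (Dvd.dvd.mul_left h6 (k₁ * z)) hj1') hj1
      have h9 : k₁ * z * (j' - j) - (k₁ * z * j' - (r + 1)) + (k₁ * z * j - r) = 1 := by ring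
      rwa [h9] at h8
    exact hprime.not_isUnit (isUnit_of_dvd_one h7)

/-- The arithmetic core: a rational non-integer `x` cannot satisfy
`{kx} + {k/N} < 1/2` for all units `k` with `{k/N} < 1/2`, unless `N = 6`. For `k` in the class
`k₀` with `{k₀/N}` closest to `1/2`, the inequality makes `{kx}` small; `int_of_fract_le` then bounds
the denominator of `x`, and the remaining possibility `{kx} = 1/N` for `N = 4u + 2` is
excluded by a further multiplier. -/
lemma arithmetic_contradiction {N n : ℕ} (hN : 3 ≤ N) (hN6 : N ≠ 6) (hn : n ≠ 0)
    (hNn : 2 * N ∣ n) {x : ℝ} {w : ℤ} (hx : (n : ℝ) * x = w) (hxi : ∀ z : ℤ, x ≠ z)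
    (H : ∀ k : ℤ, IsCoprime k (2 * n : ℤ) → Int.fract ((k : ℝ) / N) < 1 / 2 →
      Int.fract ((k : ℝ) * x) + Int.fract ((k : ℝ) / N) < 1 / 2) : False := by
  have hN0 : (0 : ℝ) < N := by exact_mod_cast (by omega : 0 < N)
  have hN3 : (3 : ℝ) ≤ N := by exact_mod_cast hN
  have heven : Even n := (even_iff_two_dvd.2 (dvd_trans ⟨N, rfl⟩ hNn))
  -- as `n` is even, being prime to `n` and to `2 * n` is the same
  have H' : ∀ k : ℤ, IsCoprime k (n : ℤ) → Int.fract ((k : ℝ) / N) < 1 / 2 →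
      Int.fract ((k : ℝ) * x) + Int.fract ((k : ℝ) / N) < 1 / 2 := by
    intro k hk
    refine H k (IsCoprime.mul_right ?_ hk)
    refine hk.of_isCoprime_of_dvd_right ?_
    exact_mod_cast even_iff_two_dvd.1 heven
  clear H
  -- positivity of the fractional parts
  have hpos : ∀ k : ℤ, IsCoprime k (n : ℤ) → 0 < Int.fract ((k : ℝ) * x) := by
    intro k hk
    refine lt_of_le_of_ne (Int.fract_nonneg _) (fun h => ?_)
    obtain ⟨u, v, huv⟩ := hk
    have h1 : (k : ℝ) * x = ⌊(k : ℝ) * x⌋ := by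
      have := Int.fract_add_floor ((k : ℝ) * x); rw [← h] at this; linarith
    apply hxi (u * ⌊(k : ℝ) * x⌋ + v * w)
    push_cast
    rw [← h1, ← hx]
    have h2 : (u : ℝ) * k + v * n = 1 := by exact_mod_cast huv
    linear_combination -x * h2
  have hfr : ∀ k k₀ : ℤ, (N : ℤ) ∣ k - k₀ →
      Int.fract ((k : ℝ) / N) = Int.fract ((k₀ : ℝ) / N) := by
    intro k k₀ h
    have := fract_eq_of_dvd_sub (x := 1 / (N : ℝ)) (w := 1) h (by push_cast; field_simp)
    simpa only [mul_one_div] using this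
  have hfr' : ∀ k k₀ : ℤ, (N : ℤ) ∣ k - k₀ → 0 ≤ k₀ → k₀ < N →
      Int.fract ((k : ℝ) / N) = (k₀ : ℝ) / N := by
    intro k k₀ h h0 h1
    rw [hfr k k₀ h]
    refine Int.fract_eq_self.2 ⟨?_, ?_⟩
    · have : (0 : ℝ) ≤ k₀ := by exact_mod_cast h0
      positivity
    · rw [div_lt_one hN0]; exact_mod_cast h1
  have hnN : N ∣ n := dvd_trans ⟨2, by ring⟩ hNn
  rcases Nat.even_or_odd N with hNe | hNo
  · obtain ⟨N₁, hN₁⟩ := hNe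
    rcases Nat.even_or_odd N₁ with ⟨u, hu⟩ | ⟨u, hu⟩
    · -- `N = 4u`, `{k₀/N}` is closest to `1/2` for `k₀ = 2u - 1`
      have hNu : (N : ℤ) = 4 * u := by omega
      have hNu' : (N : ℝ) = 4 * u := by exact_mod_cast hNu
      have hu1 : (1 : ℝ) ≤ u := by exact_mod_cast (by omega : 1 ≤ u)
      have hk₀ : IsCoprime (2 * u - 1 : ℤ) (N : ℤ) := by
        rw [hNu]
        exact ⟨-(2 * u + 1), u, by ring⟩
      have hb : ∀ k : ℤ, IsCoprime k (n : ℤ) → (N : ℤ) ∣ k - (2 * u - 1) →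
          Int.fract ((k : ℝ) * x) < 1 / N := by
        intro k hk hd
        have h1 := hfr' k _ hd (by omega) (by omega)
        have h2 : (((2 * u - 1 : ℤ) : ℝ)) / N = 1 / 2 - 1 / N := by
          rw [hNu']; push_cast; field_simp; ring
        have h3 := H' k hk
        rw [h1, h2] at h3
        have h4 : 0 < 1 / (N : ℝ) := by positivity
        have := h3 (by linarith)
        linarith
      obtain ⟨z, hz⟩ := int_of_fract_le hn ⟨N₁, by omega⟩ hnN hx hk₀ (by
        intro k hk hd
        have := hb k hk hd
        have h4 : 1 / (N : ℝ) ≤ 1 / 4 := by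
          apply one_div_le_one_div_of_le <;> linarith
        linarith)
      obtain ⟨k, hk, hd⟩ := exists_coprime_lift hn hnN hk₀
      have h1 := hb k hk hd
      have h2 := hpos k hk
      have h3 : (N : ℝ) * Int.fract ((k : ℝ) * x) = ((k * z - N * ⌊(k : ℝ) * x⌋ : ℤ) : ℝ) := by
        rw [Int.fract]; push_cast; rw [← hz]; ring
      have h4 : (0 : ℝ) < N * Int.fract ((k : ℝ) * x) := by positivity
      have h5 : (N : ℝ) * Int.fract ((k : ℝ) * x) < 1 := by
        rw [lt_div_iff₀ hN0] at h1; linarith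
      rw [h3] at h4 h5
      have h4' : 0 < k * z - N * ⌊(k : ℝ) * x⌋ := by exact_mod_cast h4
      have h5' : k * z - N * ⌊(k : ℝ) * x⌋ < 1 := by exact_mod_cast h5
      omega
    · -- `N = 4u + 2`, `{k₀/N}` is closest to `1/2` for `k₀ = 2u - 1`
      have hNu : (N : ℤ) = 4 * u + 2 := by omega
      have hNu' : (N : ℝ) = 4 * u + 2 := by exact_mod_cast hNu
      have hu2 : 2 ≤ u := by omega
      have hu1 : (2 : ℝ) ≤ u := by exact_mod_cast hu2
      have hmul : ∀ a : ℤ, IsCoprime a (2 * u + 1 : ℤ) → IsCoprime a 2 →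
          IsCoprime a (N : ℤ) := by
        intro a h1 h2
        rw [show (N : ℤ) = 2 * (2 * u + 1) by omega]
        exact IsCoprime.mul_right h2 h1
      have hk₀ : IsCoprime (2 * u - 1 : ℤ) (N : ℤ) := by
        refine hmul _ ⟨u, -(u - 1), by ring⟩ ⟨1, -(u - 1), by ring⟩
      have hk₂ : IsCoprime (2 * u + 3 : ℤ) (N : ℤ) := by
        refine hmul _ ⟨-u, u + 1, by ring⟩ ⟨1, -(u + 1), by ring⟩
      have hb : ∀ k : ℤ, IsCoprime k (n : ℤ) → (N : ℤ) ∣ k - (2 * u - 1) →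
          Int.fract ((k : ℝ) * x) < 2 / N := by
        intro k hk hd
        have h1 := hfr' k _ hd (by omega) (by omega)
        have h2 : (((2 * u - 1 : ℤ) : ℝ)) / N = 1 / 2 - 2 / N := by
          rw [hNu']; push_cast; field_simp; ring
        have h3 := H' k hk
        rw [h1, h2] at h3
        have h4 : 0 < 2 / (N : ℝ) := by positivity
        have := h3 (by linarith)
        linarith
      obtain ⟨z, hz⟩ := int_of_fract_le hn ⟨N₁, by omega⟩ hnN hx hk₀ (by
        intro k hk hd
        have := hb k hk hd
        have h4 : 2 / (N : ℝ) ≤ 1 / 4 + 0 := by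
          rw [hNu', div_le_iff₀ (by linarith)]; linarith
        linarith)
      obtain ⟨k, hk, hd⟩ := exists_coprime_lift hn hnN hk₀
      have h1 := hb k hk hd
      have h2 := hpos k hk
      have h3 : (N : ℝ) * Int.fract ((k : ℝ) * x) = ((k * z - N * ⌊(k : ℝ) * x⌋ : ℤ) : ℝ) := by
        rw [Int.fract]; push_cast; rw [← hz]; ring
      have h4 : (0 : ℝ) < N * Int.fract ((k : ℝ) * x) := by positivity
      have h5 : (N : ℝ) * Int.fract ((k : ℝ) * x) < 2 := by
        rw [lt_div_iff₀ hN0] at h1; linarith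
      rw [h3] at h4 h5
      have h4' : 0 < k * z - N * ⌊(k : ℝ) * x⌋ := by exact_mod_cast h4
      have h5' : k * z - N * ⌊(k : ℝ) * x⌋ < 2 := by exact_mod_cast h5
      have h6 : k * z - N * ⌊(k : ℝ) * x⌋ = 1 := by omega
      -- hence `{kx} = 1/N`; the multiplier `k * (2u + 3)` gives a contradiction
      obtain ⟨k', hk', hd'⟩ := exists_coprime_lift hn hnN
        (IsCoprime.mul_left (hk.of_isCoprime_of_dvd_right (by exact_mod_cast hnN)) hk₂)
      have h7 : Int.fract ((k' : ℝ) * x) = (2 * u + 3) / N := by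
        rw [fract_eq_of_dvd_sub hd' hz]
        refine fract_eq_of_bounds (z := (2 * u + 3) * ⌊(k : ℝ) * x⌋) ?_ (by positivity) ?_
        · have h8 : (k : ℝ) * z - N * ⌊(k : ℝ) * x⌋ = 1 := by exact_mod_cast h6
          have h9 : 1 / (N : ℝ) = k * x - ⌊(k : ℝ) * x⌋ := by
            rw [div_eq_iff hN0.ne', ← h8, ← hz]; ring
          rw [div_eq_mul_one_div, h9]
          push_cast
          ring
        · rw [div_lt_one hN0, hNu']; linarith
      have h8 := hfr' k' (2 * u - 3) (by
        obtain ⟨a, ha⟩ := hd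
        obtain ⟨b, hb⟩ := hd'
        refine ⟨b + a * (2 * u + 3) + u, ?_⟩
        have h10 : k = (2 * u - 1) + N * a := by linarith
        rw [h10] at hb
        rw [hNu] at hb ⊢
        linear_combination hb) (by omega) (by omega)
      have h9 := H' k' hk'
      rw [h7, h8] at h9
      push_cast at h9
      have h10 : (2 * (u : ℝ) - 3) / N < 1 / 2 := by
        rw [div_lt_iff₀ hN0, hNu']; linarith
      have h11 := h9 h10
      rw [← add_div, div_lt_iff₀ hN0, hNu'] at h11
      linarith
  · -- `N = 2u + 1`, `{k₀/N}` is closest to `1/2` for `k₀ = u`; a multiple of `N` is added to `u`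
    -- so that `k₀` is odd
    obtain ⟨u, hu⟩ := hNo
    have hNu : (N : ℤ) = 2 * u + 1 := by omega
    have hNu' : (N : ℝ) = 2 * u + 1 := by exact_mod_cast hNu
    obtain ⟨k₀, hk₀, hd₀⟩ : ∃ k₀ : ℤ, IsCoprime k₀ ((2 * N : ℕ) : ℤ) ∧ (N : ℤ) ∣ k₀ - u :=
      exists_coprime_lift (by omega) ⟨2, by ring⟩ (by rw [hNu]; exact ⟨-2, 1, by ring⟩)
    have hb : ∀ k : ℤ, IsCoprime k (n : ℤ) → ((2 * N : ℕ) : ℤ) ∣ k - k₀ →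
        Int.fract ((k : ℝ) * x) < 1 / (2 * N) := by
      intro k hk hd
      have hd' : (N : ℤ) ∣ k - u := by
        have h0 : (N : ℤ) ∣ k - k₀ := dvd_trans ⟨2, by push_cast; ring⟩ hd
        simpa using dvd_add h0 hd₀
      have h1 := hfr' k _ hd' (by omega) (by omega)
      have h2 : (((u : ℤ) : ℝ)) / N = 1 / 2 - 1 / (2 * N) := by
        rw [hNu']; push_cast; field_simp; ring
      have h3 := H' k hk
      rw [h1, h2] at h3
      have h4 : 0 < 1 / (2 * N : ℝ) := by positivity
      have := h3 (by linarith)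
      linarith
    obtain ⟨z, hz⟩ := int_of_fract_le hn ⟨N, rfl⟩ hNn hx hk₀ (by
      intro k hk hd
      have := hb k hk hd
      have h4 : 1 / (2 * N : ℝ) ≤ 1 / 4 := by
        apply one_div_le_one_div_of_le <;> linarith
      linarith)
    obtain ⟨k, hk, hd⟩ := exists_coprime_lift hn hNn hk₀
    have h1 := hb k hk hd
    have h2 := hpos k hk
    have h3 : (2 * N : ℝ) * Int.fract ((k : ℝ) * x)
        = ((k * z - 2 * N * ⌊(k : ℝ) * x⌋ : ℤ) : ℝ) := by
      rw [Int.fract]; push_cast; rw [← hz]; push_cast; ring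
    have h4 : (0 : ℝ) < 2 * N * Int.fract ((k : ℝ) * x) := by positivity
    have h5 : (2 * N : ℝ) * Int.fract ((k : ℝ) * x) < 1 := by
      rw [lt_div_iff₀ (by positivity)] at h1; linarith
    rw [h3] at h4 h5
    have h4' : 0 < k * z - 2 * N * ⌊(k : ℝ) * x⌋ := by exact_mod_cast h4
    have h5' : k * z - 2 * N * ⌊(k : ℝ) * x⌋ < 1 := by exact_mod_cast h5
    omega

/-! ### Conjugation of cyclotomic directions -/

/-- The root of unity `exp (πi/n)`. -/
def rootU (n : ℕ) : ℂ := Complex.exp (π * Complex.I / n)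

lemma rootU_ne_zero (n : ℕ) : rootU n ≠ 0 := Complex.exp_ne_zero _

lemma rootU_zpow (n : ℕ) (j : ℤ) :
    rootU n ^ j = Complex.exp (((π * j / n : ℝ) : ℂ) * Complex.I) := by
  rw [rootU, ← Complex.exp_int_mul]
  congr 1
  push_cast
  ring

lemma rootU_primitive {n : ℕ} (hn : n ≠ 0) : IsPrimitiveRoot (rootU n) (2 * n) := by
  have h := Complex.isPrimitiveRoot_exp (2 * n) (by omega)
  have h2 : Complex.exp (2 * π * Complex.I / ((2 * n : ℕ) : ℂ)) = rootU n := by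
    rw [rootU]
    congr 1
    have : (n : ℂ) ≠ 0 := by exact_mod_cast hn
    push_cast
    field_simp
  rwa [h2] at h

/-- The conjugation map. For `k` prime to `2n` there is an additive map `Φ` of the plane which acts
on the directions `exp (πij/n)` as the Galois automorphism `exp (πi/n) ↦ exp (πik/n)`, and sends real
multiples of such a direction to real multiples of its image. Outside the cyclotomic field, `Φ` comes
from a linear retraction of the reals, which may be chosen not to kill prescribed nonzero reals. -/
lemma exists_conjugation {n : ℕ} (hn : n ≠ 0) (h2 : 2 ∣ n) {k : ℤ}
    (hk : IsCoprime k (2 * n : ℤ)) (S : Finset ℝ) (hS : ∀ s ∈ S, s ≠ 0) :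
    ∃ (f : ℝ →+ ℝ) (Φ : ℂ →+ ℂ), f 1 = 1 ∧ (∀ s ∈ S, f s ≠ 0) ∧
      ∀ (τ : ℝ) (j : ℤ), Φ (τ * rootU n ^ j) = f τ * rootU n ^ (k * j) := by
  classical
  set ω := rootU n with hω
  have hω0 : ω ≠ 0 := rootU_ne_zero n
  have hprim : IsPrimitiveRoot ω (2 * n) := rootU_primitive hn
  have hprim' : IsPrimitiveRoot (ω ^ k) (2 * n) := by
    refine hprim.zpow_of_gcd_eq_one k ?_
    have : IsCoprime k ((2 * n : ℕ) : ℤ) := by exact_mod_cast hk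
    exact Int.isCoprime_iff_gcd_eq_one.1 this
  have hint : IsIntegral ℚ ω := hprim.isIntegral (by omega) |>.tower_top
  have hroot : Polynomial.aeval (ω ^ k) (minpoly ℚ ω) = 0 := by
    have h1 := Polynomial.cyclotomic_eq_minpoly_rat hprim (by omega)
    have h3 := Polynomial.cyclotomic_eq_minpoly_rat hprim' (by omega)
    rw [← h1, h3, minpoly.aeval]
  obtain ⟨K, hωK, hadj, σ, hσ⟩ : ∃ (K : IntermediateField ℚ ℂ) (hωK : ω ∈ K)
      (_ : IntermediateField.adjoin ℚ {ω} = K) (σ : K →ₐ[ℚ] ℂ), σ ⟨ω, hωK⟩ = ω ^ k := by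
    refine ⟨_, IntermediateField.mem_adjoin_simple_self ℚ ω, rfl,
      (IntermediateField.algHomAdjoinIntegralEquiv ℚ hint).symm
        ⟨ω ^ k, Polynomial.mem_aroots.2 ⟨minpoly.ne_zero hint, hroot⟩⟩, ?_⟩
    exact IntermediateField.algHomAdjoinIntegralEquiv_symm_apply_gen ℚ hint _
  have hconjω : (starRingEnd ℂ) ω = ω⁻¹ := by
    rw [hω, rootU, ← Complex.exp_conj, ← Complex.exp_neg]
    congr 1
    simp [neg_div]
  have hconjωk : (starRingEnd ℂ) (ω ^ k) = (ω ^ k)⁻¹ := by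
    rw [map_zpow₀, hconjω, inv_zpow]
  -- `σ` commutes with complex conjugation
  have hconj : ∀ x : K, ∃ y : K, (y : ℂ) = (starRingEnd ℂ) x ∧ σ y = (starRingEnd ℂ) (σ x) := by
    subst hadj
    rintro ⟨x, hx⟩
    refine IntermediateField.adjoin_induction ℚ
      (p := fun x hx => ∃ y : IntermediateField.adjoin ℚ {ω}, (y : ℂ) = (starRingEnd ℂ) x ∧
        σ y = (starRingEnd ℂ) (σ ⟨x, hx⟩)) ?_ ?_ ?_ ?_ ?_ hx
    · intro x hx
      obtain rfl : x = ω := by simpa using hx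
      refine ⟨⟨ω, hωK⟩⁻¹, ?_, ?_⟩
      · rw [hconjω]; rfl
      · rw [hσ, hconjωk, map_inv₀, hσ]
    · intro q
      refine ⟨algebraMap ℚ _ q, by simp, ?_⟩
      have h1 : σ ⟨algebraMap ℚ ℂ q, IntermediateField.algebraMap_mem _ q⟩ = algebraMap ℚ ℂ q := σ.commutes q
      rw [h1, σ.commutes]
      simp
    · rintro x y hx hy ⟨x', h1, e1⟩ ⟨y', h3, e3⟩
      refine ⟨x' + y', by rw [map_add, ← h1, ← h3]; rfl, ?_⟩
      rw [map_add, e1, e3, ← map_add, ← map_add]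
      rfl
    · rintro x hx ⟨x', h1, e1⟩
      refine ⟨x'⁻¹, by rw [map_inv₀, ← h1]; rfl, ?_⟩
      rw [map_inv₀, e1, ← map_inv₀, ← map_inv₀]
      rfl
    · rintro x y hx hy ⟨x', h1, e1⟩ ⟨y', h3, e3⟩
      refine ⟨x' * y', by rw [map_mul, ← h1, ← h3]; rfl, ?_⟩
      rw [map_mul, e1, e3, ← map_mul, ← map_mul]
      rfl
  -- the real subfield, on which `σ` is real
  let Kr : Subfield ℝ := K.toSubfield.comap Complex.ofRealHom
  let ι : Kr →+* K := (Complex.ofRealHom.comp Kr.subtype).codRestrict K.toSubfield (fun x => x.2)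
  have hι : ∀ x : Kr, ((ι x : K) : ℂ) = ((x : ℝ) : ℂ) := fun x => rfl
  have hreal : ∀ x : Kr, (((σ (ι x)).re : ℝ) : ℂ) = σ (ι x) := by
    intro x
    obtain ⟨y, h1, e1⟩ := hconj (ι x)
    rw [← Complex.conj_eq_iff_re, ← e1]
    congr 1
    apply Subtype.ext
    rw [h1, hι, Complex.conj_ofReal]
  obtain ⟨g, hg⟩ : ∃ g : Kr →+* ℝ, ∀ x, ((g x : ℝ) : ℂ) = σ (ι x) :=
    ⟨{ toFun := fun x => (σ (ι x)).re
       map_one' := by simp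
       map_zero' := by simp
       map_add' := fun x y => by simp
       map_mul' := fun x y => by
        rw [← Complex.ofReal_inj, Complex.ofReal_mul, hreal, hreal, hreal, map_mul, map_mul] },
      hreal⟩
  obtain ⟨ψ, hψ⟩ : ∃ ψ : Module.Dual Kr ℝ, ∀ s ∈ insert 1 S, ψ s ≠ 0 := by
    obtain ⟨ψ, -, h⟩ := Module.Dual.exists_forall_mem_ne_zero_of_forall_exists
      (⊤ : Submodule Kr (Module.Dual Kr ℝ))
      (fun s : (insert 1 S : Finset ℝ) => Module.Dual.eval Kr ℝ s) (by
        rintro ⟨s, hs⟩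
        have hs0 : s ≠ 0 := by
          rcases Finset.mem_insert.1 hs with rfl | h
          exacts [one_ne_zero, hS s h]
        obtain ⟨g, hg⟩ := Module.Projective.exists_dual_ne_zero Kr hs0
        exact ⟨g, trivial, hg⟩)
    exact ⟨ψ, fun s hs => h ⟨s, hs⟩⟩
  have hψ1 : ψ 1 ≠ 0 := hψ 1 (Finset.mem_insert_self _ _)
  let f : ℝ →+ ℝ := g.toAddMonoidHom.comp
    ((AddMonoidHom.mulLeft (ψ 1)⁻¹).comp ψ.toAddMonoidHom)
  have hf : ∀ x, f x = g ((ψ 1)⁻¹ * ψ x) := fun x => rfl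
  have hfsmul : ∀ (c : Kr) (x : ℝ), f (x * c) = f x * g c := by
    intro c x
    have h1 : ψ (x * c) = c * ψ x := by
      have h3 := ψ.map_smul c x
      rw [smul_eq_mul] at h3
      rw [← h3, Subfield.smul_def, smul_eq_mul, mul_comm]
    rw [hf, hf, ← map_mul, h1]
    congr 1
    ring
  have hIω : ω ^ (n / 2) = Complex.I := by
    obtain ⟨e, rfl⟩ := h2
    rw [Nat.mul_div_cancel_left e (by norm_num), hω, rootU, ← Complex.exp_nat_mul]
    have he : (e : ℂ) ≠ 0 := by
      have : e ≠ 0 := by rintro rfl; exact hn rfl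
      exact_mod_cast this
    rw [show (e : ℂ) * (π * Complex.I / ((2 * e : ℕ) : ℂ)) = π / 2 * Complex.I by
      push_cast; field_simp]
    exact Complex.exp_pi_div_two_mul_I
  have hIK : Complex.I ∈ K := by rw [← hIω]; exact pow_mem hωK _
  let iK : K := ⟨Complex.I, hIK⟩
  let Φ : ℂ →+ ℂ :=
    { toFun := fun z => f z.re + σ iK * f z.im
      map_zero' := by simp
      map_add' := by
        intro x y; simp only [Complex.add_re, Complex.add_im, map_add]; push_cast; ring }
  have hΦ : ∀ z, Φ z = f z.re + σ iK * f z.im := fun z => rfl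
  refine ⟨f, Φ, ?_, ?_, ?_⟩
  · rw [hf, inv_mul_cancel₀ hψ1, map_one]
  · intro s hs
    rw [hf, Ne, map_eq_zero]
    exact mul_ne_zero (inv_ne_zero hψ1) (hψ s (Finset.mem_insert_of_mem hs))
  · intro τ j
    let w : K := ⟨ω, hωK⟩ ^ j
    have hw : (w : ℂ) = ω ^ j := by
      change ((⟨ω, hωK⟩ ^ j : K) : ℂ) = _
      exact map_zpow₀ K.val _ _
    obtain ⟨y, hy, -⟩ := hconj w
    -- the real and imaginary parts of `ω ^ j` lie in `Kr`
    have hre : (ω ^ j).re ∈ Kr := by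
      change (((ω ^ j).re : ℝ) : ℂ) ∈ K
      rw [Complex.re_eq_add_conj, ← hw, ← hy]
      exact K.div_mem (K.add_mem w.2 y.2) (by exact_mod_cast K.algebraMap_mem 2)
    have him : (ω ^ j).im ∈ Kr := by
      change (((ω ^ j).im : ℝ) : ℂ) ∈ K
      rw [Complex.im_eq_sub_conj, ← hw, ← hy]
      exact K.div_mem (K.sub_mem w.2 y.2)
        (K.mul_mem (by exact_mod_cast K.algebraMap_mem 2) hIK)
    have hdec : w = ι ⟨_, hre⟩ + iK * ι ⟨_, him⟩ := by
      apply Subtype.ext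
      rw [hw]
      change ω ^ j = ((ω ^ j).re : ℂ) + Complex.I * ((ω ^ j).im : ℂ)
      rw [mul_comm]
      exact (Complex.re_add_im _).symm
    have hσw : σ w = ω ^ (k * j) := by
      change σ (⟨ω, hωK⟩ ^ j) = _
      rw [map_zpow₀, hσ, zpow_mul]
    rw [hΦ, Complex.re_ofReal_mul, Complex.im_ofReal_mul, hfsmul ⟨_, hre⟩, hfsmul ⟨_, him⟩,
      ← hσw, hdec, map_add, map_mul, ← hg, ← hg]
    push_cast
    ring

/-! ### Boundary relation for signed triangle families -/

/-- The planar cross product. -/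
def cr (z w : ℂ) : ℝ := z.re * w.im - z.im * w.re

/-- The sign of `c + ε a + ε² b` is positive for small `ε > 0`. -/
def LexPos (c a b : ℝ) : Prop := 0 < c ∨ (c = 0 ∧ (0 < a ∨ (a = 0 ∧ 0 < b)))

lemma eventually_lexPos {c a b : ℝ} (h : c ≠ 0 ∨ a ≠ 0 ∨ b ≠ 0) :
    ∀ᶠ ε in nhdsWithin (0:ℝ) (Set.Ioi 0),
      (0 < c + ε * a + ε ^ 2 * b ↔ LexPos c a b) ∧ c + ε * a + ε ^ 2 * b ≠ 0 := by
  have hpos : ∀ᶠ ε in nhdsWithin (0:ℝ) (Set.Ioi 0), 0 < ε := self_mem_nhdsWithin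
  have key : ∀ c a b : ℝ, 0 < c →
      ∀ᶠ ε in nhdsWithin (0:ℝ) (Set.Ioi 0), 0 < c + ε * a + ε ^ 2 * b := by
    intro c a b hc
    have : Filter.Tendsto (fun ε : ℝ => c + ε * a + ε ^ 2 * b) (nhdsWithin 0 (Set.Ioi 0))
        (nhds (c + 0 * a + 0 ^ 2 * b)) :=
      (Continuous.tendsto (by fun_prop) 0).mono_left nhdsWithin_le_nhds
    exact this.eventually_const_lt (by simpa using hc)
  rcases lt_trichotomy c 0 with hc | rfl | hc
  · filter_upwards [key (-c) (-a) (-b) (by linarith)] with ε hε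
    have : c + ε * a + ε ^ 2 * b < 0 := by nlinarith
    exact ⟨⟨fun h => by linarith, fun h => by
      rcases h with h | h
      · linarith
      · linarith [h.1]⟩, this.ne⟩
  · rcases lt_trichotomy a 0 with ha | rfl | ha
    · filter_upwards [key (-a) (-b) 0 (by linarith), hpos] with ε hε h0
      have : 0 + ε * a + ε ^ 2 * b < 0 := by nlinarith
      exact ⟨⟨fun h => by linarith, fun h => by
        rcases h with h | ⟨-, h | h⟩
        · linarith
        · linarith
        · linarith [h.1]⟩, this.ne⟩
    · have hb : b ≠ 0 := by simpa using h
      filter_upwards [hpos] with ε h0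
      have h2 : 0 < ε ^ 2 := by positivity
      refine ⟨?_, by simpa using ⟨h0.ne', hb⟩⟩
      simp [LexPos, h2]
    · filter_upwards [key a b 0 ha, hpos] with ε hε h0
      have : 0 < 0 + ε * a + ε ^ 2 * b := by nlinarith
      exact ⟨⟨fun h => Or.inr ⟨rfl, Or.inl ha⟩, fun h => this⟩, this.ne'⟩
  · filter_upwards [key c a b hc] with ε hε
    exact ⟨⟨fun h => Or.inl hc, fun h => hε⟩, hε.ne'⟩

open Classical in
/-- Indicator of the simultaneous positivity of three affine functions at an infinitesimal
displacement, with signs `σ`, `τ` in the two directions. -/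
def cornerInd (c A B : Fin 3 → ℝ) (σ τ : ℝ) : ℝ :=
  if ∀ k, LexPos (c k) (σ * A k) (τ * B k) then 1 else 0

open Classical in
/-- The contribution of the `k`-th edge to the corner operator. -/
def cornerEdge (c A : Fin 3 → ℝ) (k : Fin 3) : ℝ :=
  if A k = 0 ∧ c k = 0 then (if c (k + 2) = 0 then 1 else 0) - (if c (k + 1) = 0 then 1 else 0)
  else 0

/-- The case of `corner_formula` in which the edge `0` lies on the given line. -/
lemma corner_aux {c A B : Fin 3 → ℝ} (hc : 0 < c 0 + c 1 + c 2) (hA : A 0 + A 1 + A 2 = 0)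
    (hD : A 0 * B 1 - A 1 * B 0 ≠ 0) (h0 : A 0 = 0 ∧ c 0 = 0) :
    cornerInd c A B 1 1 - cornerInd c A B 1 (-1) - cornerInd c A B (-1) 1
        + cornerInd c A B (-1) (-1)
      = SignType.sign (A 0 * B 1 - A 1 * B 0) *
        (cornerEdge c A 0 + cornerEdge c A 1 + cornerEdge c A 2) := by
  obtain ⟨hA0, hc0⟩ := h0
  have hA2 : A 2 = - A 1 := by linarith
  have hD' : A 1 ≠ 0 ∧ B 0 ≠ 0 := by simpa [hA0] using hD
  obtain ⟨h1, h2⟩ := hD'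
  simp only [cornerInd, cornerEdge, Fin.forall_fin_succ, LexPos]
  have e1 : (1:Fin 3) + 1 = 2 := rfl
  have e2 : (1:Fin 3) + 2 = 0 := rfl
  have e3 : (2:Fin 3) + 1 = 0 := rfl
  have e4 : (2:Fin 3) + 2 = 1 := rfl
  simp [hA0, hc0, hA2, e1, e2, e3, e4, h1]
  rw [hc0] at hc
  rcases lt_or_gt_of_ne h1 with h1 | h1 <;> rcases lt_or_gt_of_ne h2 with h2 | h2 <;>
  rcases lt_trichotomy (c 1) 0 with h3 | h3 | h3 <;>
  rcases lt_trichotomy (c 2) 0 with h4 | h4 | h4 <;>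
  first
  | (exfalso; linarith)
  | simp [h1, h2, h3, h4, h1.not_gt, h2.not_gt, h3.not_gt, h4.not_gt, h3.ne', h4.ne', h3.ne, h4.ne, mul_pos, mul_pos_of_neg_of_neg, mul_neg_of_neg_of_pos, mul_neg_of_pos_of_neg]
  | simp [h1, h2, h3, h4, h1.not_gt, h2.not_gt, h3.not_gt, h3.ne', h3.ne, mul_pos, mul_pos_of_neg_of_neg, mul_neg_of_neg_of_pos, mul_neg_of_pos_of_neg]
  | simp [h1, h2, h3, h4, h1.not_gt, h2.not_gt, h4.not_gt, h4.ne', h4.ne, mul_pos, mul_pos_of_neg_of_neg, mul_neg_of_neg_of_pos, mul_neg_of_pos_of_neg]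

lemma cornerInd_rot (c A B : Fin 3 → ℝ) (σ τ : ℝ) (r : Fin 3) :
    cornerInd (fun k => c (k + r)) (fun k => A (k + r)) (fun k => B (k + r)) σ τ
      = cornerInd c A B σ τ := by
  unfold cornerInd
  congr 1
  exact propext ⟨fun h k => by simpa using h (k - r), fun h k => h (k + r)⟩

/-- The second difference of the indicator of a triangle at a corner only sees the edges on the
given line that start or end at the corner. -/
lemma corner_formula {c A B : Fin 3 → ℝ} (hc : 0 < c 0 + c 1 + c 2) (hA : A 0 + A 1 + A 2 = 0)
    (hB : B 0 + B 1 + B 2 = 0) (hD : A 0 * B 1 - A 1 * B 0 ≠ 0) :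
    cornerInd c A B 1 1 - cornerInd c A B 1 (-1) - cornerInd c A B (-1) 1
        + cornerInd c A B (-1) (-1)
      = SignType.sign (A 0 * B 1 - A 1 * B 0) *
        (cornerEdge c A 0 + cornerEdge c A 1 + cornerEdge c A 2) := by
  have e1 : (1:Fin 3) + 1 = 2 := rfl
  have e2 : (1:Fin 3) + 2 = 0 := rfl
  have e3 : (2:Fin 3) + 1 = 0 := rfl
  have e4 : (2:Fin 3) + 2 = 1 := rfl
  have hA2 : A 2 = - A 0 - A 1 := by linarith
  have hB2 : B 2 = - B 0 - B 1 := by linarith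
  by_cases h0 : A 0 = 0 ∧ c 0 = 0
  · exact corner_aux hc hA hD h0
  by_cases h1 : A 1 = 0 ∧ c 1 = 0
  · have hD1 : A 1 * B 2 - A 2 * B 1 = A 0 * B 1 - A 1 * B 0 := by rw [hA2, hB2]; ring
    have := corner_aux (c := fun k => c (k + 1)) (A := fun k => A (k + 1))
      (B := fun k => B (k + 1)) (by simp [e1, e3]; linarith) (by simp [e1, e3]; linarith)
      (by simpa [e1, e3, hD1] using hD) (by simpa using h1)
    simp only [cornerInd_rot] at this
    rw [this]
    simp [e1, e2, e3, e4, hD1, cornerEdge]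
    left; ring
  by_cases h2 : A 2 = 0 ∧ c 2 = 0
  · have hD1 : A 2 * B 0 - A 0 * B 2 = A 0 * B 1 - A 1 * B 0 := by rw [hA2, hB2]; ring
    have := corner_aux (c := fun k => c (k + 2)) (A := fun k => A (k + 2))
      (B := fun k => B (k + 2)) (by simp [e2, e4]; linarith) (by simp [e2, e4]; linarith)
      (by simpa [e2, e4, hD1] using hD) (by simpa using h2)
    simp only [cornerInd_rot] at this
    rw [this]
    simp [e1, e2, e3, e4, hD1, cornerEdge]
    left; ring
  have hτ : ∀ σ : ℝ, σ ≠ 0 → cornerInd c A B σ 1 = cornerInd c A B σ (-1) := by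
    intro σ hσ
    unfold cornerInd
    congr 1
    apply propext
    refine forall_congr' fun k => ?_
    have hk : ¬ (A k = 0 ∧ c k = 0) := by fin_cases k <;> assumption
    unfold LexPos
    constructor <;>
    · rintro (h | ⟨h, h' | ⟨h', -⟩⟩)
      · exact Or.inl h
      · exact Or.inr ⟨h, Or.inl h'⟩
      · exact absurd ⟨by simpa [hσ] using h', h⟩ hk
  rw [hτ 1 one_ne_zero, hτ (-1) (by norm_num)]
  simp [cornerEdge, h0, h1, h2]

/-- If a weighted family of arrows `x e → y e` has zero net flow at every point, the weighted sum of the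
differences of a potential along the arrows vanishes. -/
lemma sum_weights_zero {E Z : Type*} [Fintype E] (w : E → ℝ) (x y : E → Z) (G : Z → ℝ)
    (h : ∀ z, ∑ e, w e * ((open Classical in if y e = z then 1 else 0)
      - (open Classical in if x e = z then 1 else 0)) = 0) :
    ∑ e, w e * (G (x e) - G (y e)) = 0 := by
  classical
  set S : Finset Z := Finset.univ.image x ∪ Finset.univ.image y
  have hx : ∀ e, G (x e) = ∑ z ∈ S, G z * (if x e = z then 1 else 0) := by
    intro e
    rw [Finset.sum_eq_single (x e)]
    · simp
    · intro b _ hb; simp [Ne.symm hb]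
    · intro h; exact absurd (by simp [S]) h
  have hy : ∀ e, G (y e) = ∑ z ∈ S, G z * (if y e = z then 1 else 0) := by
    intro e
    rw [Finset.sum_eq_single (y e)]
    · simp
    · intro b _ hb; simp [Ne.symm hb]
    · intro h; exact absurd (by simp [S]) h
  have : ∀ e, w e * (G (x e) - G (y e)) = ∑ z ∈ S, - (G z *
      (w e * ((if y e = z then 1 else 0) - (if x e = z then 1 else 0)))) := by
    intro e
    rw [hx, hy, ← Finset.sum_sub_distrib, Finset.mul_sum]
    refine Finset.sum_congr rfl fun z _ => ?_
    ring
  rw [Finset.sum_congr rfl fun e _ => this e, Finset.sum_comm]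
  refine Finset.sum_eq_zero fun z _ => ?_
  rw [Finset.sum_neg_distrib, ← Finset.mul_sum]
  have := h z
  convert neg_zero
  rw [mul_eq_zero]; right
  convert this

lemma cr_sub_right (z w v : ℂ) : cr z (w - v) = cr z w - cr z v := by
  simp [cr]; ring

lemma exists_smul_of_cr_eq_zero {v w : ℂ} (hv : v ≠ 0) (h : cr v w = 0) :
    ∃ t : ℝ, w = t * v := by
  have hn : v.re ^ 2 + v.im ^ 2 ≠ 0 := by
    intro h0
    apply hv
    apply Complex.ext <;> simp <;> nlinarith [sq_nonneg v.re, sq_nonneg v.im]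
  refine ⟨(v.re * w.re + v.im * w.im) / (v.re ^ 2 + v.im ^ 2), ?_⟩
  unfold cr at h
  apply Complex.ext
  · rw [Complex.re_ofReal_mul]
    field_simp
    linear_combination (-v.im) * h
  · rw [Complex.im_ofReal_mul]
    field_simp
    linear_combination (v.re) * h

lemma eq_zero_of_cr {a b w : ℂ} (hab : cr a b ≠ 0) (h1 : cr a w = 0) (h2 : cr b w = 0) :
    w = 0 := by
  have e1 : cr a b * w.re = 0 := by
    unfold cr at *
    linear_combination b.re * h1 - a.re * h2
  have e2 : cr a b * w.im = 0 := by
    unfold cr at *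
    linear_combination b.im * h1 - a.im * h2
  apply Complex.ext
  · simpa [hab] using e1
  · simpa [hab] using e2

/-- Twice the signed area of a triangle. -/
def ar (P : Fin 3 → ℂ) : ℝ := cr (P 1 - P 0) (P 2 - P 0)

/-- The affine function vanishing on the `k`-th edge, equal to `ar P` at the opposite vertex. -/
def ell (P : Fin 3 → ℂ) (k : Fin 3) (x : ℂ) : ℝ := cr (P (k + 2) - P (k + 1)) (x - P (k + 1))

open Classical in
/-- Indicator of the open triangle. -/
def chi (P : Fin 3 → ℂ) (x : ℂ) : ℝ := if ∀ k, 0 < ar P * ell P k x then 1 else 0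

/-- Additivity along every line; in particular such an `E` vanishes on the diagonal. -/
def LineAdd (E : ℂ → ℂ → ℝ) : Prop :=
  ∀ (p v : ℂ) (s t r : ℝ), E (p + s * v) (p + t * v) + E (p + t * v) (p + r * v)
    = E (p + s * v) (p + r * v)

/-- The sum of `E` along the boundary of a triangle. -/
def bd (E : ℂ → ℂ → ℝ) (P : Fin 3 → ℂ) : ℝ := ∑ k : Fin 3, E (P (k + 1)) (P (k + 2))

/-- The line carrying the `k`-th edge. -/
def edgeLine (P : Fin 3 → ℂ) (k : Fin 3) : Set ℂ := {x | ell P k x = 0}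

lemma ell_sum (P : Fin 3 → ℂ) (x : ℂ) : ell P 0 x + ell P 1 x + ell P 2 x = ar P := by
  have e1 : (1:Fin 3) + 1 = 2 := rfl
  have e2 : (1:Fin 3) + 2 = 0 := rfl
  have e3 : (2:Fin 3) + 1 = 0 := rfl
  have e4 : (2:Fin 3) + 2 = 1 := rfl
  simp only [ell, ar, cr, e1, e2, e3, e4, zero_add, Complex.sub_re, Complex.sub_im]
  ring

lemma ell_add (P : Fin 3 → ℂ) (k : Fin 3) (p v : ℂ) (t : ℝ) :
    ell P k (p + t * v) = ell P k p + t * cr (P (k + 2) - P (k + 1)) v := by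
  simp only [ell, cr, Complex.sub_re, Complex.sub_im, Complex.add_re, Complex.add_im,
    Complex.re_ofReal_mul, Complex.im_ofReal_mul]
  ring

lemma edge_cr (P : Fin 3 → ℂ) (k : Fin 3) :
    cr (P (k + 2) - P (k + 1)) (P (k + 1) - P (k + 3)) = - ar P := by
  have e1 : (1:Fin 3) + 1 = 2 := rfl
  have e2 : (1:Fin 3) + 2 = 0 := rfl
  have e3 : (2:Fin 3) + 1 = 0 := rfl
  have e4 : (2:Fin 3) + 2 = 1 := rfl
  fin_cases k <;>
    simp [ar, cr, e1, e2, e3, e4, Complex.sub_re, Complex.sub_im] <;> ring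

lemma edge_ne (P : Fin 3 → ℂ) (hP : ar P ≠ 0) (k : Fin 3) : P (k + 2) - P (k + 1) ≠ 0 := by
  intro h
  have := edge_cr P k
  rw [h] at this
  exact hP (by rw [← neg_eq_zero, ← this]; simp [cr])

lemma ell_self1 (P : Fin 3 → ℂ) (k : Fin 3) : ell P k (P (k + 1)) = 0 := by simp [ell, cr]

lemma ell_self2 (P : Fin 3 → ℂ) (k : Fin 3) : ell P k (P (k + 2)) = 0 := by
  simp [ell, cr]; ring

lemma ell_vertex1 (P : Fin 3 → ℂ) (hP : ar P ≠ 0) (k : Fin 3) {p : ℂ} (h : ell P k p = 0) :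
    ell P (k + 2) p = 0 ↔ P (k + 1) = p := by
  have e5 : k + 2 + 2 = k + 1 := by fin_cases k <;> rfl
  have e6 : k + 2 + 1 = k := by fin_cases k <;> rfl
  constructor
  · intro h2
    have h3 : P (k + 1) - P k ≠ 0 := by simpa [e5, e6] using edge_ne P hP (k + 2)
    have h4 := edge_cr P k
    rw [show k + 3 = k by fin_cases k <;> rfl] at h4
    have h5 : cr (P (k + 1) - P k) (p - P (k + 1)) = 0 := by
      rw [← h2]; simp only [ell, e5, e6, cr, Complex.sub_re, Complex.sub_im]; ring
    have := eq_zero_of_cr (by rw [h4]; exact neg_ne_zero.2 hP) h h5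
    exact (sub_eq_zero.1 this).symm
  · rintro rfl
    have := ell_self2 P (k + 2)
    rwa [e5] at this

lemma ell_vertex2 (P : Fin 3 → ℂ) (hP : ar P ≠ 0) (k : Fin 3) {p : ℂ} (h : ell P k p = 0) :
    ell P (k + 1) p = 0 ↔ P (k + 2) = p := by
  have e5 : k + 1 + 2 = k := by fin_cases k <;> rfl
  have e6 : k + 1 + 1 = k + 2 := by fin_cases k <;> rfl
  have := ell_vertex1 P hP (k + 1) (p := p)
  rw [e5, e6] at this
  constructor
  · intro h1
    exact (this h1).1 h
  · rintro rfl
    have := ell_self1 P (k + 1)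
    rwa [e6] at this

lemma edgeLine_eq_iff {P Q : Fin 3 → ℂ} (hP : ar P ≠ 0) (hQ : ar Q ≠ 0) {k l : Fin 3} {p : ℂ}
    (hp : p ∈ edgeLine Q l) :
    edgeLine P k = edgeLine Q l ↔
      cr (P (k + 2) - P (k + 1)) (Q (l + 2) - Q (l + 1)) = 0 ∧ ell P k p = 0 := by
  set d := Q (l + 2) - Q (l + 1) with hd
  have hd0 : d ≠ 0 := edge_ne Q hQ l
  have hp' : ell Q l p = 0 := hp
  constructor
  · intro h
    have h1 : p ∈ edgeLine P k := by rw [h]; exact hp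
    refine ⟨?_, h1⟩
    have h2 : p + (1:ℝ) * d ∈ edgeLine P k := by
      rw [h]
      change ell Q l _ = 0
      rw [ell_add, hp']
      simp [cr, ← hd]; ring
    have h3 : ell P k _ = 0 := h2
    rw [ell_add] at h3
    have h4 : ell P k p = 0 := h1
    simpa [h4] using h3
  · rintro ⟨h1, h2⟩
    have hd1 := edge_ne P hP k
    obtain ⟨t, ht⟩ := exists_smul_of_cr_eq_zero hd1 h1
    have ht0 : t ≠ 0 := by rintro rfl; simp at ht; exact hd0 ht
    ext x
    have e1 : ell P k x = cr (P (k + 2) - P (k + 1)) (x - p) := by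
      have := ell_add P k p (x - p) 1
      rw [h2] at this
      simpa using this
    have e2 : ell Q l x = cr d (x - p) := by
      have := ell_add Q l p (x - p) 1
      rw [hp'] at this
      simpa [hd] using this
    have e3 : cr d (x - p) = t * cr (P (k + 2) - P (k + 1)) (x - p) := by
      rw [ht]; simp only [cr, Complex.re_ofReal_mul, Complex.im_ofReal_mul]; ring
    change ell P k x = 0 ↔ ell Q l x = 0
    rw [e1, e2, e3]
    simp [ht0]

lemma lineAdd_edge {E : ℂ → ℂ → ℝ} (hE : LineAdd E) {P : Fin 3 → ℂ} (hP : ar P ≠ 0) {k : Fin 3}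
    {x y z : ℂ} (hx : x ∈ edgeLine P k) (hy : y ∈ edgeLine P k) (hz : z ∈ edgeLine P k) :
    E x y + E y z = E x z := by
  have key : ∀ x ∈ edgeLine P k, ∃ t : ℝ, x = P (k + 1) + t * (P (k + 2) - P (k + 1)) := by
    intro x hx
    obtain ⟨t, ht⟩ := exists_smul_of_cr_eq_zero (edge_ne P hP k) hx
    exact ⟨t, by rw [← ht]; ring⟩
  obtain ⟨s, rfl⟩ := key x hx
  obtain ⟨t, rfl⟩ := key y hy
  obtain ⟨r, rfl⟩ := key z hz
  exact hE _ _ _ _ _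

/-- If a signed combination of indicators of open triangles vanishes off all the edge lines, then
the corresponding combination of oriented boundaries vanishes for every line-additive functional.
Near a point `p` of a line, a second difference of the relation isolates the edges on that line
which start or end at `p`. -/
lemma boundary_relation {ι : Type*} [Fintype ι] (n : ι → ℝ) (P : ι → Fin 3 → ℂ)
    (hP : ∀ i, ar (P i) ≠ 0)
    (hchi : ∀ x, (∀ i k, ell (P i) k x ≠ 0) → ∑ i, n i * chi (P i) x = 0)
    {E : ℂ → ℂ → ℝ} (hE : LineAdd E) :
    ∑ i, n i * (SignType.sign (ar (P i)) : ℝ) * bd E (P i) = 0 := by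
  classical
  -- the corner relation
  have corner : ∀ p d : ℂ, d ≠ 0 → ∑ i, n i * (SignType.sign (ar (P i)) *
      ∑ k, cornerEdge (fun k => ar (P i) * ell (P i) k p)
        (fun k => ar (P i) * cr (P i (k + 2) - P i (k + 1)) d) k) = 0 := by
    intro p d hd
    set e : ℂ := Complex.I * d with he
    have hde : 0 < cr d e := by
      have : cr d e = Complex.normSq d := by
        simp [cr, he, Complex.normSq_apply]
      rw [this]
      exact Complex.normSq_pos.2 hd
    set c : ι → Fin 3 → ℝ := fun i k => ar (P i) * ell (P i) k p with hc
    set A : ι → Fin 3 → ℝ := fun i k => ar (P i) * cr (P i (k + 2) - P i (k + 1)) d with hA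
    set B : ι → Fin 3 → ℝ := fun i k => ar (P i) * cr (P i (k + 2) - P i (k + 1)) e with hB
    have hAB : ∀ i k, A i k ≠ 0 ∨ B i k ≠ 0 := by
      intro i k
      by_contra! h
      have h1 : cr (P i (k + 2) - P i (k + 1)) d = 0 := by
        simpa [hA, hP i] using h.1
      have h2 : cr (P i (k + 2) - P i (k + 1)) e = 0 := by
        simpa [hB, hP i] using h.2
      refine edge_ne (P i) (hP i) k (eq_zero_of_cr hde.ne' ?_ ?_)
      · rw [← neg_eq_zero, ← h1]; simp only [cr]; ring
      · rw [← neg_eq_zero, ← h2]; simp only [cr]; ring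
    have hz : ∀ σ τ : ℝ, σ ≠ 0 → τ ≠ 0 → ∑ i, n i * cornerInd (c i) (A i) (B i) σ τ = 0 := by
      intro σ τ hσ hτ
      have hev : ∀ᶠ ε in nhdsWithin (0:ℝ) (Set.Ioi 0), ∀ i k,
          (0 < c i k + ε * (σ * A i k) + ε ^ 2 * (τ * B i k) ↔
            LexPos (c i k) (σ * A i k) (τ * B i k)) ∧
          c i k + ε * (σ * A i k) + ε ^ 2 * (τ * B i k) ≠ 0 := by
        rw [Filter.eventually_all]
        intro i
        rw [Filter.eventually_all]
        intro k
        refine eventually_lexPos ?_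
        rcases hAB i k with h | h
        · exact Or.inr (Or.inl (mul_ne_zero hσ h))
        · exact Or.inr (Or.inr (mul_ne_zero hτ h))
      obtain ⟨ε, hε⟩ := hev.exists
      set q : ℂ := p + ((ε * σ : ℝ) : ℂ) * d + ((ε ^ 2 * τ : ℝ) : ℂ) * e with hq
      have hell : ∀ i k, ar (P i) * ell (P i) k q
          = c i k + ε * (σ * A i k) + ε ^ 2 * (τ * B i k) := by
        intro i k
        rw [hq, ell_add, ell_add]
        simp only [hc, hA, hB]
        ring
      have := hchi q (fun i k h0 => (hε i k).2 (by rw [← hell, h0, mul_zero]))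
      rw [← this]
      refine Finset.sum_congr rfl fun i _ => ?_
      congr 1
      unfold cornerInd chi
      congr 1
      refine propext (forall_congr' fun k => ?_)
      rw [hell, (hε i k).1]
    have hform : ∀ i, cornerInd (c i) (A i) (B i) 1 1 - cornerInd (c i) (A i) (B i) 1 (-1)
        - cornerInd (c i) (A i) (B i) (-1) 1 + cornerInd (c i) (A i) (B i) (-1) (-1)
        = SignType.sign (ar (P i)) * ∑ k, cornerEdge (c i) (A i) k := by
      intro i
      have e1 : (1:Fin 3) + 1 = 2 := rfl
      have e2 : (1:Fin 3) + 2 = 0 := rfl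
      have e3 : (2:Fin 3) + 1 = 0 := rfl
      have e4 : (2:Fin 3) + 2 = 1 := rfl
      have hD : A i 0 * B i 1 - A i 1 * B i 0 = (ar (P i)) ^ 2 * cr d e * ar (P i) := by
        simp only [hA, hB, e1, e2, e3, e4, zero_add, ar, cr, Complex.sub_re, Complex.sub_im]
        ring
      have hpos : 0 < (ar (P i)) ^ 2 * cr d e :=
        mul_pos (pow_pos (abs_pos.2 (hP i)) 2 |>.trans_le (by rw [sq_abs])) hde
      rw [corner_formula, hD, Fin.sum_univ_three]
      · rw [sign_mul, sign_pos hpos, one_mul]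
      · simp only [hc]
        rw [← mul_add, ← mul_add, ell_sum]
        exact mul_self_pos.2 (hP i)
      · simp only [hA, e1, e2, e3, e4, zero_add, cr, Complex.sub_re, Complex.sub_im]
        ring
      · simp only [hB, e1, e2, e3, e4, zero_add, cr, Complex.sub_re, Complex.sub_im]
        ring
      · rw [hD]
        exact mul_ne_zero hpos.ne' (hP i)
    have h1 := hz 1 1 one_ne_zero one_ne_zero
    have h2 := hz 1 (-1) one_ne_zero (by norm_num)
    have h3 := hz (-1) 1 (by norm_num) one_ne_zero
    have h4 := hz (-1) (-1) (by norm_num) (by norm_num)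
    have : ∑ i, n i * (cornerInd (c i) (A i) (B i) 1 1 - cornerInd (c i) (A i) (B i) 1 (-1)
        - cornerInd (c i) (A i) (B i) (-1) 1 + cornerInd (c i) (A i) (B i) (-1) (-1)) = 0 := by
      simp only [mul_add, mul_sub, Finset.sum_add_distrib, Finset.sum_sub_distrib, h1, h2, h3, h4]
      ring
    rw [← this]
    exact Finset.sum_congr rfl fun i _ => by rw [hform]
  -- a potential on every edge line
  set base : Set ℂ → ℂ := fun L => if h : L.Nonempty then h.some else 0 with hbase
  set G : Set ℂ × ℂ → ℝ := fun z => E (base z.1) z.2 with hG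
  have hpot : ∀ i k, E (P i (k + 1)) (P i (k + 2))
      = G (edgeLine (P i) k, P i (k + 2)) - G (edgeLine (P i) k, P i (k + 1)) := by
    intro i k
    have h1 : P i (k + 1) ∈ edgeLine (P i) k := ell_self1 _ _
    have h2 : P i (k + 2) ∈ edgeLine (P i) k := ell_self2 _ _
    have h0 : base (edgeLine (P i) k) ∈ edgeLine (P i) k := by
      have hne : (edgeLine (P i) k).Nonempty := ⟨_, h1⟩
      simp only [hbase, hne, dif_pos]
      exact hne.some_mem
    have := lineAdd_edge hE (hP i) h0 h1 h2
    simp only [hG]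
    linarith
  have hmain := sum_weights_zero (E := ι × Fin 3)
    (fun e => n e.1 * (SignType.sign (ar (P e.1)) : ℝ))
    (fun e => (edgeLine (P e.1) e.2, P e.1 (e.2 + 2)))
    (fun e => (edgeLine (P e.1) e.2, P e.1 (e.2 + 1))) G ?_
  · rw [← hmain, Fintype.sum_prod_type]
    refine Finset.sum_congr rfl fun i _ => ?_
    rw [bd, Finset.mul_sum]
    refine Finset.sum_congr rfl fun k _ => ?_
    rw [hpot]
  rintro ⟨L, p⟩
  by_cases hL : ∃ (i : ι) (k : Fin 3), edgeLine (P i) k = L ∧ p ∈ L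
  · obtain ⟨i0, k0, rfl, hp⟩ := hL
    refine Eq.trans ?_ (corner p _ (edge_ne (P i0) (hP i0) k0))
    rw [Fintype.sum_prod_type]
    refine Finset.sum_congr rfl fun i _ => ?_
    rw [Finset.mul_sum, Finset.mul_sum]
    refine Finset.sum_congr rfl fun k _ => ?_
    rw [mul_assoc]
    congr 2
    simp only [cornerEdge, Prod.mk.injEq, mul_eq_zero, hP i, false_or]
    simp only [edgeLine_eq_iff (hP i) (hP i0) hp]
    by_cases h : cr (P i (k + 2) - P i (k + 1)) (P i0 (k0 + 2) - P i0 (k0 + 1)) = 0 ∧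
        ell (P i) k p = 0
    · simp only [h, true_and, and_self, if_true]
      simp only [ell_vertex1 (P i) (hP i) k h.2, ell_vertex2 (P i) (hP i) k h.2]
    · simp only [h, false_and, if_false, sub_self]
  · push Not at hL
    refine Finset.sum_eq_zero fun e _ => ?_
    have h1 : (edgeLine (P e.1) e.2, P e.1 (e.2 + 1)) ≠ (L, p) := by
      intro h
      rw [Prod.mk.injEq] at h
      refine hL _ _ h.1 ?_
      rw [← h.1, ← h.2]
      exact ell_self1 _ _
    have h2 : (edgeLine (P e.1) e.2, P e.1 (e.2 + 2)) ≠ (L, p) := by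
      intro h
      rw [Prod.mk.injEq] at h
      refine hL _ _ h.1 ?_
      rw [← h.1, ← h.2]
      exact ell_self2 _ _
    simp [h1, h2]

/-! ### The boundary of a tiling of the regular polygon -/

/-- Barycentric coordinates. -/
lemma tri_decomp (P : Fin 3 → ℂ) (x : ℂ) :
    (ar P : ℂ) * x = ell P 0 x * P 0 + ell P 1 x * P 1 + ell P 2 x * P 2 := by
  have e1 : (1:Fin 3) + 1 = 2 := rfl
  have e2 : (1:Fin 3) + 2 = 0 := rfl
  have e3 : (2:Fin 3) + 1 = 0 := rfl
  have e4 : (2:Fin 3) + 2 = 1 := rfl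
  apply Complex.ext <;>
  · simp only [ell, ar, cr, e1, e2, e3, e4, zero_add, Complex.sub_re, Complex.sub_im,
      Complex.add_re, Complex.add_im, Complex.re_ofReal_mul, Complex.im_ofReal_mul]
    ring

lemma ell_convex (P : Fin 3 → ℂ) (k : Fin 3) (w : ℝ) : Convex ℝ {x | 0 ≤ w * ell P k x} := by
  intro x hx y hy a b ha hb hab
  simp only [Set.mem_ofPred_eq] at *
  have : w * ell P k (a • x + b • y) = a * (w * ell P k x) + b * (w * ell P k y) := by
    have hb' : b = 1 - a := by linarith
    subst hb'
    simp only [ell, cr, Complex.sub_re, Complex.sub_im, Complex.real_smul,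
      Complex.add_re, Complex.add_im, Complex.re_ofReal_mul, Complex.im_ofReal_mul]
    ring
  rw [this]
  positivity

lemma mem_tri_iff {P : Fin 3 → ℂ} (hP : ar P ≠ 0) (x : ℂ) :
    x ∈ convexHull ℝ (Set.range P) ↔ ∀ k, 0 ≤ ar P * ell P k x := by
  have hself : ∀ k, ell P k (P k) = ar P := by
    intro k
    have h1 := edge_cr P k
    rw [show k + 3 = k by fin_cases k <;> rfl] at h1
    rw [← neg_neg (ar P), ← h1]
    simp only [ell, cr, Complex.sub_re, Complex.sub_im]; ring
  constructor
  · intro hx k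
    refine convexHull_min ?_ (ell_convex P k (ar P)) hx
    rintro _ ⟨i, rfl⟩
    have : i = k ∨ i = k + 1 ∨ i = k + 2 := by fin_cases i <;> fin_cases k <;> decide
    change 0 ≤ ar P * ell P k (P i)
    rcases this with rfl | rfl | rfl
    · rw [hself]; exact mul_self_nonneg _
    · rw [ell_self1, mul_zero]
    · rw [ell_self2, mul_zero]
  · intro h
    have hsq : 0 < ar P * ar P := mul_self_pos.2 hP
    have hw : ∀ k, 0 ≤ ell P k x / ar P := by
      intro k
      have : ell P k x / ar P = (ar P * ell P k x) / (ar P * ar P) := by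
        field_simp
      rw [this]
      exact div_nonneg (h k) hsq.le
    have hmem := (convex_convexHull ℝ (Set.range P)).sum_mem (t := Finset.univ)
      (w := fun k => ell P k x / ar P) (z := P) (fun k _ => hw k)
      (by rw [Fin.sum_univ_three, ← add_div, ← add_div, ell_sum, div_self hP])
      (fun k _ => subset_convexHull ℝ _ ⟨k, rfl⟩)
    convert hmem
    have hc : (ar P : ℂ) ≠ 0 := by exact_mod_cast hP
    rw [Fin.sum_univ_three]
    simp only [Complex.real_smul, Complex.ofReal_div]
    field_simp
    rw [mul_comm, tri_decomp]

lemma chi_eq_one_iff (P : Fin 3 → ℂ) (x : ℂ) : chi P x = 1 ↔ ∀ k, 0 < ar P * ell P k x := by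
  unfold chi
  split_ifs with h <;> simp [h]

lemma chi_eq_zero_or_one (P : Fin 3 → ℂ) (x : ℂ) : chi P x = 0 ∨ chi P x = 1 := by
  unfold chi
  split_ifs <;> simp

lemma chi_eq_one_iff_mem {P : Fin 3 → ℂ} (hP : ar P ≠ 0) {x : ℂ} (hx : ∀ k, ell P k x ≠ 0) :
    chi P x = 1 ↔ x ∈ convexHull ℝ (Set.range P) := by
  rw [chi_eq_one_iff, mem_tri_iff hP]
  exact forall_congr' fun k => (mul_ne_zero hP (hx k)).symm.le_iff_lt.symm

lemma mem_interior_of_chi {P : Fin 3 → ℂ} (hP : ar P ≠ 0) {x : ℂ} (hx : chi P x = 1) :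
    x ∈ interior (convexHull ℝ (Set.range P)) := by
  rw [chi_eq_one_iff] at hx
  rw [mem_interior]
  refine ⟨{y | ∀ k, 0 < ar P * ell P k y}, fun y hy => (mem_tri_iff hP y).2 fun k => (hy k).le, ?_,
    hx⟩
  simp only [Set.ofPred_forall]
  refine isOpen_iInter_of_finite fun k => isOpen_lt continuous_const ?_
  unfold ell cr
  fun_prop

/-- The point of the unit circle at angle `θ`. -/
def cs (θ : ℝ) : ℂ := Complex.exp (θ * Complex.I)

lemma cs_re (θ : ℝ) : (cs θ).re = Real.cos θ := Complex.exp_ofReal_mul_I_re θ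
lemma cs_im (θ : ℝ) : (cs θ).im = Real.sin θ := Complex.exp_ofReal_mul_I_im θ

lemma cs_add (a b : ℝ) : cs (a + b) = cs a * cs b := by
  simp only [cs]; rw [← Complex.exp_add]; congr 1; push_cast; ring

/-- The vertices of the regular polygon, as complex numbers. -/
def cV (N : ℕ) (j : ℕ) : ℂ := cs (2 * π * j / N)

/-- The triangle joining the centre to the `j`-th side. -/
def fan (N j : ℕ) : Fin 3 → ℂ := ![0, cV N j, cV N (j + 1)]

lemma cr_cs (r a b : ℝ) : cr (cs a) (r * cs b) = r * Real.sin (b - a) := by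
  simp only [cr, Complex.re_ofReal_mul, Complex.im_ofReal_mul, cs_re, cs_im, Real.sin_sub]
  ring

lemma cr_cs_three (a b c : ℝ) : cr (cs b - cs a) (cs c - cs a)
    = 4 * Real.sin ((b - a) / 2) * Real.sin ((c - b) / 2) * Real.sin ((c - a) / 2) := by
  have h : cr (cs b - cs a) (cs c - cs a)
      = Real.sin (c - b) - Real.sin (c - a) + Real.sin (b - a) := by
    simp only [cr, Complex.sub_re, Complex.sub_im, cs_re, cs_im, Real.sin_sub]
    ring
  rw [h]
  obtain ⟨X, hX⟩ : ∃ X, (b - a) / 2 = X := ⟨_, rfl⟩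
  obtain ⟨Y, hY⟩ : ∃ Y, (c - b) / 2 = Y := ⟨_, rfl⟩
  rw [hX, hY, show (c - a) / 2 = X + Y by linarith, show c - b = 2 * Y by linarith,
    show b - a = 2 * X by linarith, show c - a = 2 * (X + Y) by linarith]
  simp only [Real.sin_two_mul, Real.sin_add, Real.cos_add]
  have h1 := Real.sin_sq_add_cos_sq X
  have h2 := Real.sin_sq_add_cos_sq Y
  linear_combination (-2 * Real.sin Y * Real.cos Y) * h1 - 2 * Real.sin X * Real.cos X * h2

/-- The polygon lies to the left of each of its sides. -/
lemma cV_turn {N : ℕ} (hN : 3 ≤ N) (i j : ℕ) (hi : i < N) (hj : j < N) :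
    0 ≤ cr (cV N (j + 1) - cV N j) (cV N i - cV N j) := by
  have hN0 : (0:ℝ) < N := by exact_mod_cast (by omega : 0 < N)
  have hNN : (3:ℝ) ≤ N := by exact_mod_cast hN
  rw [cV, cV, cV, cr_cs_three]
  have h1 : 0 ≤ Real.sin ((2 * π * ((j + 1 : ℕ) : ℝ) / N - 2 * π * j / N) / 2) := by
    rw [show (2 * π * ((j + 1 : ℕ) : ℝ) / N - 2 * π * j / N) / 2 = π / N by push_cast; field_simp; ring]
    exact Real.sin_nonneg_of_nonneg_of_le_pi (by positivity)
      (div_le_self Real.pi_pos.le (by linarith))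
  rw [show (2 * π * i / N - 2 * π * ((j + 1 : ℕ) : ℝ) / N) / 2 = ((i:ℝ) - (j + 1)) * (π / N) by
    push_cast; field_simp,
    show (2 * π * i / N - 2 * π * (j : ℝ) / N) / 2 = ((i:ℝ) - j) * (π / N) by field_simp,
    mul_assoc]
  have hpN : 0 < π / N := by positivity
  have hpe : N * (π / N) = π := by field_simp
  refine mul_nonneg (mul_nonneg (by norm_num) h1) ?_
  have hi' : (i:ℝ) + 1 ≤ N := by exact_mod_cast hi
  have hj' : (j:ℝ) + 1 ≤ N := by exact_mod_cast hj
  have hi0 : (0:ℝ) ≤ i := by positivity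
  have hj0 : (0:ℝ) ≤ j := by positivity
  rcases le_or_gt i j with h | h
  · have h' : (i:ℝ) ≤ j := by exact_mod_cast h
    refine mul_nonneg_of_nonpos_of_nonpos ?_ ?_ <;>
      refine Real.sin_nonpos_of_nonpos_of_neg_pi_le (by nlinarith) (by nlinarith)
  · have h' : (j:ℝ) + 1 ≤ i := by exact_mod_cast h
    refine mul_nonneg ?_ ?_ <;>
      refine Real.sin_nonneg_of_nonneg_of_le_pi (by nlinarith) (by nlinarith)

lemma fan_ell0 (N j : ℕ) (x : ℂ) :
    ell (fan N j) 0 x = cr (cV N (j + 1) - cV N j) (x - cV N j) := rfl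

lemma fan_ell1 (N j : ℕ) (x : ℂ) : ell (fan N j) 1 x = - cr (cV N (j + 1)) x := by
  change cr (0 - cV N (j + 1)) (x - cV N (j + 1)) = _
  simp [cr]; ring

lemma fan_ell2 (N j : ℕ) (x : ℂ) : ell (fan N j) 2 x = cr (cV N j) x := by
  change cr (cV N j - 0) (x - 0) = _
  simp

lemma fan_ar {N : ℕ} (hN : 3 ≤ N) (j : ℕ) : 0 < ar (fan N j) := by
  have hN0 : (0:ℝ) < N := by exact_mod_cast (by omega : 0 < N)
  have hNN : (3:ℝ) ≤ N := by exact_mod_cast hN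
  have : ar (fan N j) = Real.sin (2 * π / N) := by
    change cr (cV N j - 0) (cV N (j + 1) - 0) = _
    have := cr_cs 1 (2 * π * j / N) (2 * π * ((j + 1 : ℕ) : ℝ) / N)
    simp only [Complex.ofReal_one, one_mul] at this
    rw [sub_zero, sub_zero, cV, cV, this]
    congr 1
    push_cast; field_simp; ring
  rw [this]
  refine Real.sin_pos_of_pos_of_lt_pi (by positivity) ?_
  rw [div_lt_iff₀ hN0]
  nlinarith [Real.pi_pos]

/-- Polar coordinates, with the angle measured in units of `2 π / N`. -/
lemma exists_polar {N : ℕ} (hN : 3 ≤ N) {x : ℂ} (hx : x ≠ 0) :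
    ∃ r u : ℝ, 0 < r ∧ 0 ≤ u ∧ u < N ∧ x = r * cs (2 * π * u / N) := by
  have hN0 : (0:ℝ) < N := by exact_mod_cast (by omega : 0 < N)
  have hx' : x = ‖x‖ * cs (Complex.arg x) := (Complex.norm_mul_exp_arg_mul_I x).symm
  have hpi := Real.pi_pos
  rcases lt_or_ge (Complex.arg x) 0 with h | h
  · refine ⟨‖x‖, (Complex.arg x + 2 * π) * N / (2 * π), norm_pos_iff.2 hx, ?_, ?_, ?_⟩
    · have := Complex.neg_pi_lt_arg x
      have : 0 ≤ Complex.arg x + 2 * π := by linarith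
      positivity
    · rw [div_lt_iff₀ (by positivity)]
      nlinarith
    · rw [show 2 * π * ((Complex.arg x + 2 * π) * N / (2 * π)) / N = Complex.arg x + 2 * π by
        field_simp]
      rw [cs_add, show cs (2 * π) = 1 by rw [cs]; push_cast; exact Complex.exp_two_pi_mul_I,
        mul_one]
      exact hx'
  · refine ⟨‖x‖, Complex.arg x * N / (2 * π), norm_pos_iff.2 hx, by positivity, ?_, ?_⟩
    · have := Complex.arg_le_pi x
      rw [div_lt_iff₀ (by positivity)]
      nlinarith
    · rw [show 2 * π * (Complex.arg x * N / (2 * π)) / N = Complex.arg x by field_simp]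
      exact hx'

lemma zero_mem_polygon {N : ℕ} (hN : 3 ≤ N) :
    (0:ℂ) ∈ convexHull ℝ (Set.range fun j : Fin N => cV N j) := by
  have hN0 : (0:ℝ) < N := by exact_mod_cast (by omega : 0 < N)
  have hmem := (convex_convexHull ℝ (Set.range fun j : Fin N => cV N j)).sum_mem
    (t := Finset.univ) (w := fun _ => (1 / N : ℝ)) (z := fun j : Fin N => cV N j)
    (fun k _ => by positivity) (by simp; field_simp)
    (fun k _ => subset_convexHull ℝ _ ⟨k, rfl⟩)
  convert hmem
  rw [← Finset.smul_sum, Fin.sum_univ_eq_sum_range (fun j => cV N j) N]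
  have hprim := Complex.isPrimitiveRoot_exp N (by omega)
  have := hprim.geom_sum_eq_zero (by omega)
  rw [show (∑ j ∈ Finset.range N, cV N j) = 0 from ?_, smul_zero]
  rw [← this]
  refine Finset.sum_congr rfl fun j _ => ?_
  rw [cV, cs, ← Complex.exp_nat_mul]
  congr 1
  push_cast
  ring

/-- Off the edge lines, the triangles joining the centre to the sides cover each point of the polygon
exactly once. A point at angle `2 π u / N` lies in the triangle with index `⌊u⌋`. -/
lemma fan_sum {N : ℕ} (hN : 3 ≤ N) {x : ℂ} (hx : ∀ (j : Fin N) k, ell (fan N j) k x ≠ 0) :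
    ∑ j : Fin N, chi (fan N j) x
      = (open Classical in if x ∈ convexHull ℝ (Set.range fun j : Fin N => cV N j) then 1 else 0) := by
  classical
  have hN0 : (0:ℝ) < N := by exact_mod_cast (by omega : 0 < N)
  have hNN : (3:ℝ) ≤ N := by exact_mod_cast hN
  have hpi := Real.pi_pos
  have hV : ∀ j : ℕ, j ≤ N → cV N j ∈ convexHull ℝ (Set.range fun j : Fin N => cV N j) := by
    intro j hj
    rcases hj.lt_or_eq with h | rfl
    · exact subset_convexHull ℝ _ ⟨⟨j, h⟩, rfl⟩
    · refine subset_convexHull ℝ _ ⟨⟨0, by omega⟩, ?_⟩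
      simp only [cV]
      rw [mul_div_cancel_right₀ _ hN0.ne']
      simp [cs]
  split_ifs with hmem
  · have hx0 : x ≠ 0 := by
      rintro rfl
      exact hx ⟨0, by omega⟩ 2 (by rw [fan_ell2]; simp [cr])
    obtain ⟨r, u, hr, hu0, huN, hxu⟩ := exists_polar hN hx0
    have hs2 : ∀ j : ℕ, ell (fan N j) 2 x = r * Real.sin (2 * π * (u - j) / N) := by
      intro j
      rw [fan_ell2, hxu, cV, cr_cs]
      congr 2
      ring
    have hs1 : ∀ j : ℕ, ell (fan N j) 1 x = r * Real.sin (2 * π * (j + 1 - u) / N) := by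
      intro j
      rw [fan_ell1, hxu, cV, cr_cs, ← mul_neg, ← Real.sin_neg]
      congr 2
      push_cast
      ring
    have hfl : ⌊u⌋₊ < N := by rw [Nat.floor_lt hu0]; exact huN
    rw [Finset.sum_eq_single ⟨⌊u⌋₊, hfl⟩]
    · rw [chi_eq_one_iff]
      intro k
      refine mul_pos (fan_ar hN _) ((hx ⟨⌊u⌋₊, hfl⟩ k).symm.lt_of_le ?_)
      have hf1 := Nat.floor_le hu0
      have hf2 := Nat.lt_floor_add_one u
      fin_cases k
      · refine convexHull_min (s := Set.range fun j : Fin N => cV N j)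
          (t := {x | 0 ≤ ell (fan N ⌊u⌋₊) 0 x}) ?_ ?_ hmem
        · rintro _ ⟨i, rfl⟩
          exact cV_turn hN i _ i.2 hfl
        · simpa using ell_convex (fan N ⌊u⌋₊) 0 1
      · change 0 ≤ ell (fan N ⌊u⌋₊) 1 x
        rw [hs1]
        refine mul_nonneg hr.le (Real.sin_nonneg_of_nonneg_of_le_pi ?_ ?_)
        · have : 0 ≤ (⌊u⌋₊ : ℝ) + 1 - u := by linarith
          positivity
        · rw [div_le_iff₀ hN0]
          nlinarith
      · change 0 ≤ ell (fan N ⌊u⌋₊) 2 x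
        rw [hs2]
        refine mul_nonneg hr.le (Real.sin_nonneg_of_nonneg_of_le_pi ?_ ?_)
        · have : 0 ≤ u - (⌊u⌋₊ : ℝ) := by linarith
          positivity
        · rw [div_le_iff₀ hN0]
          nlinarith
    · intro j _ hj
      rcases chi_eq_zero_or_one (fan N j) x with h | h
      · exact h
      exfalso
      apply hj
      rw [chi_eq_one_iff] at h
      have h1 := (mul_pos_iff_of_pos_left (fan_ar hN _)).1 (h 1)
      have h2 := (mul_pos_iff_of_pos_left (fan_ar hN _)).1 (h 2)
      rw [hs1, mul_pos_iff_of_pos_left hr] at h1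
      rw [hs2, mul_pos_iff_of_pos_left hr] at h2
      have hj0 : (0:ℝ) ≤ (j:ℕ) := by positivity
      have hjN : ((j:ℕ):ℝ) + 1 ≤ N := by exact_mod_cast j.2
      have neg : ∀ y : ℝ, -N / 2 ≤ y → y ≤ 0 → Real.sin (2 * π * y / N) ≤ 0 := by
        intro y h1 h2
        refine Real.sin_nonpos_of_nonpos_of_neg_pi_le ?_ ?_
        · rw [div_le_iff₀ hN0]; nlinarith
        · rw [le_div_iff₀ hN0]; nlinarith
      have neg' : ∀ y : ℝ, N / 2 ≤ y → y ≤ N → Real.sin (2 * π * y / N) ≤ 0 := by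
        intro y h1 h2
        have : 2 * π * y / N = 2 * π * (y - N) / N + 2 * π := by field_simp; ring
        rw [this, Real.sin_add_two_pi]
        exact neg _ (by linarith) (by linarith)
      have h3 : ((j:ℕ):ℝ) < u := by
        by_contra! h3
        rcases le_or_gt (-(N:ℝ) / 2) (u - (j:ℕ)) with h4 | h4
        · exact absurd h2 (neg _ h4 (by linarith)).not_gt
        · exact absurd h1 (neg' _ (by linarith) (by linarith)).not_gt
      have h4 : u < ((j:ℕ):ℝ) + 1 := by
        by_contra! h4
        rcases le_or_gt (-(N:ℝ) / 2) ((j:ℕ) + 1 - u) with h5 | h5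
        · exact absurd h1 (neg _ h5 (by linarith)).not_gt
        · exact absurd h2 (neg' _ (by linarith) (by linarith)).not_gt
      apply Fin.ext
      symm
      exact (Nat.floor_eq_iff hu0).2 ⟨h3.le, h4⟩
    · simp
  · refine Finset.sum_eq_zero fun j _ => ?_
    rcases chi_eq_zero_or_one (fan N j) x with h | h
    · exact h
    exfalso
    apply hmem
    rw [chi_eq_one_iff_mem (fan_ar hN _).ne' (hx j)] at h
    refine convexHull_min ?_ (convex_convexHull ℝ _) h
    rintro _ ⟨i, rfl⟩
    fin_cases i
    · exact zero_mem_polygon hN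
    · exact hV j j.2.le
    · exact hV (j + 1) j.2

/-- Off the edge lines, the tiles cover each point of their union exactly once. -/
lemma tile_sum {m : ℕ} {P : Fin m → Fin 3 → ℂ} (hP : ∀ t, ar (P t) ≠ 0)
    (hdisj : Pairwise fun t s => Disjoint (interior (convexHull ℝ (Set.range (P t))))
      (interior (convexHull ℝ (Set.range (P s)))))
    {x : ℂ} (hx : ∀ t k, ell (P t) k x ≠ 0) :
    ∑ t, chi (P t) x
      = (open Classical in if x ∈ ⋃ t, convexHull ℝ (Set.range (P t)) then 1 else 0) := by
  classical
  split_ifs with hmem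
  · obtain ⟨t, ht⟩ := Set.mem_iUnion.1 hmem
    have ht1 := (chi_eq_one_iff_mem (hP t) (hx t)).2 ht
    rw [Finset.sum_eq_single t, ht1]
    · intro s _ hs
      rcases chi_eq_zero_or_one (P s) x with h | h
      · exact h
      exact absurd (mem_interior_of_chi (hP t) ht1)
        (Set.disjoint_left.1 (hdisj hs) (mem_interior_of_chi (hP s) h))
    · simp
  · refine Finset.sum_eq_zero fun t _ => ?_
    rcases chi_eq_zero_or_one (P t) x with h | h
    · exact h
    exact absurd (Set.mem_iUnion.2 ⟨t, (chi_eq_one_iff_mem (hP t) (hx t)).1 h⟩) hmem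

lemma LineAdd.self {E : ℂ → ℂ → ℝ} (hE : LineAdd E) (x : ℂ) : E x x = 0 := by
  have := hE x 0 0 0 0
  simpa using this

lemma LineAdd.anti {E : ℂ → ℂ → ℝ} (hE : LineAdd E) (x y : ℂ) : E y x = - E x y := by
  have := hE x (y - x) 0 1 0
  simp [hE.self] at this
  linarith

/-- The oriented boundaries of the tiles add up to the boundary of the polygon, for every
line-additive functional. -/
lemma tiling_boundary {N m : ℕ} (hN : 3 ≤ N) {P : Fin m → Fin 3 → ℂ} (hP : ∀ t, ar (P t) ≠ 0)
    (hdisj : Pairwise fun t s => Disjoint (interior (convexHull ℝ (Set.range (P t))))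
      (interior (convexHull ℝ (Set.range (P s)))))
    (hU : ⋃ t, convexHull ℝ (Set.range (P t)) = convexHull ℝ (Set.range fun j : Fin N => cV N j))
    {E : ℂ → ℂ → ℝ} (hE : LineAdd E) :
    ∑ t, (SignType.sign (ar (P t)) : ℝ) * bd E (P t)
      = ∑ j ∈ Finset.range N, E (cV N j) (cV N (j + 1)) := by
  have hN0 : (0:ℝ) < N := by exact_mod_cast (by omega : 0 < N)
  have h := boundary_relation (ι := Fin m ⊕ Fin N) (Sum.elim (fun _ => 1) (fun _ => -1))
    (Sum.elim P (fun j => fan N j)) ?_ ?_ hE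
  · rw [Fintype.sum_sum_type] at h
    simp only [Sum.elim_inl, Sum.elim_inr, one_mul] at h
    have h2 : ∑ j : Fin N, -1 * (SignType.sign (ar (fan N j)) : ℝ) * bd E (fan N j)
        = - ∑ j ∈ Finset.range N, E (cV N j) (cV N (j + 1)) := by
      rw [← Fin.sum_univ_eq_sum_range (fun j => E (cV N j) (cV N (j + 1)))]
      have h3 : ∑ j : Fin N, (E 0 (cV N (j + 1)) - E 0 (cV N j)) = 0 := by
        rw [Fin.sum_univ_eq_sum_range (fun j => E 0 (cV N (j + 1)) - E 0 (cV N j)),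
          Finset.sum_range_sub (fun j => E 0 (cV N j))]
        have : cV N N = cV N 0 := by
          simp only [cV]
          rw [mul_div_cancel_right₀ _ hN0.ne']
          simp [cs]
        rw [this, sub_self]
      rw [← Finset.sum_neg_distrib, ← add_zero (∑ j : Fin N, -E _ _), ← h3,
        ← Finset.sum_add_distrib]
      refine Finset.sum_congr rfl fun j _ => ?_
      rw [sign_pos (fan_ar hN j), bd, Fin.sum_univ_three]
      change -1 * ((1:SignType):ℝ) * (E (cV N j) (cV N (j + 1)) + E (cV N (j + 1)) 0
        + E 0 (cV N j)) = _
      rw [hE.anti 0 (cV N (j + 1))]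
      simp
      ring
    linarith
  · rintro (t | j)
    · exact hP t
    · exact (fan_ar hN j).ne'
  · intro x hx
    rw [Fintype.sum_sum_type]
    simp only [Sum.elim_inl, Sum.elim_inr, one_mul, neg_mul, Finset.sum_neg_distrib]
    rw [tile_sum hP hdisj (fun t k => hx (Sum.inl t) k), fan_sum hN (fun j k => hx (Sum.inr j) k),
      hU]
    ring

/-! ### The angle functional -/

/-- The oriented angle from `z` to `w`, in `(-π, π)`, set to `0` when `z` and `w` are dependent. -/
def th (z w : ℂ) : ℝ := open Classical in if cr z w = 0 then 0 else Complex.arg (w / z)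

lemma div_im_eq (z w : ℂ) : (w / z).im = cr z w / Complex.normSq z := by
  rw [Complex.div_im, cr]
  ring

lemma cs_ne_zero (a : ℝ) : cs a ≠ 0 := Complex.exp_ne_zero _

lemma arg_mul_cs {r a : ℝ} (hr : 0 < r) (h1 : -π < a) (h2 : a ≤ π) :
    Complex.arg (r * cs a) = a := by
  have := Complex.arg_mul_cos_add_sin_mul_I hr ⟨h1, h2⟩
  rwa [show Complex.cos a + Complex.sin a * Complex.I = cs a by
    rw [cs, Complex.exp_mul_I]] at this

lemma cr_mul_mul (c z w : ℂ) : cr (c * z) (c * w) = Complex.normSq c * cr z w := by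
  simp only [cr, Complex.mul_re, Complex.mul_im, Complex.normSq_apply]
  ring

lemma cr_smul_cs (r s a b : ℝ) : cr (r * cs a) (s * cs b) = r * s * Real.sin (b - a) := by
  simp only [cr, Complex.re_ofReal_mul, Complex.im_ofReal_mul, cs_re, cs_im, Real.sin_sub]
  ring

lemma cs_sub (a b : ℝ) : cs (a - b) = cs a / cs b := by
  rw [eq_div_iff (cs_ne_zero b), ← cs_add, sub_add_cancel]

lemma th_eq {c : ℂ} (hc : c ≠ 0) {r s a b : ℝ} (hr : 0 < r) (hs : 0 < s) (h1 : -π < b - a)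
    (h2 : b - a < π) : th (c * (r * cs a)) (c * (s * cs b)) = b - a := by
  unfold th
  rw [cr_mul_mul, cr_smul_cs]
  split_ifs with h
  · have hn := Complex.normSq_pos.2 hc
    have h3 : Real.sin (b - a) = 0 := by
      rcases mul_eq_zero.1 h with h | h
      · exact absurd h hn.ne'
      · rcases mul_eq_zero.1 h with h | h
        · exact absurd h (mul_pos hr hs).ne'
        · exact h
    exact ((Real.sin_eq_zero_iff_of_lt_of_lt h1 h2).1 h3).symm
  · have : c * (s * cs b) / (c * (r * cs a)) = ((s / r : ℝ) : ℂ) * cs (b - a) := by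
      have hr' : (r : ℂ) ≠ 0 := by exact_mod_cast hr.ne'
      have := cs_ne_zero a
      rw [cs_sub]
      push_cast
      field_simp
    rw [this, arg_mul_cs (div_pos hs hr) h1 h2.le]

lemma th_pos {z w : ℂ} (h : 0 < cr z w) : 0 < th z w := by
  have hz : z ≠ 0 := by rintro rfl; simp [cr] at h
  have him : 0 < (w / z).im := by
    rw [div_im_eq]; exact div_pos h (Complex.normSq_pos.2 hz)
  rw [th, if_neg h.ne']
  refine lt_of_le_of_ne (Complex.arg_nonneg_iff.2 him.le) ?_
  intro h0
  have := (Complex.arg_eq_zero_iff.1 h0.symm).2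
  exact him.ne' this

lemma th_neg {z w : ℂ} (h : cr z w < 0) : th z w < 0 := by
  have hz : z ≠ 0 := by rintro rfl; simp [cr] at h
  rw [th, if_neg h.ne, Complex.arg_neg_iff, div_im_eq]
  exact div_neg_of_neg_of_pos h (Complex.normSq_pos.2 hz)

lemma th_gt (z w : ℂ) : -π < th z w := by
  unfold th
  split_ifs
  · linarith [Real.pi_pos]
  · exact Complex.neg_pi_lt_arg _

lemma cr_anti (z w : ℂ) : cr w z = - cr z w := by simp only [cr]; ring

lemma th_anti (z w : ℂ) : th w z = - th z w := by
  unfold th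
  simp only [cr_anti z w, neg_eq_zero]
  split_ifs with h
  · simp
  · have hz : z ≠ 0 := by rintro rfl; simp [cr] at h
    rw [← inv_div, Complex.arg_inv, if_neg]
    intro h0
    have := (Complex.arg_eq_pi_iff.1 h0).2
    rw [div_im_eq] at this
    exact (div_ne_zero h (Complex.normSq_pos.2 hz).ne') this

/-- The angle subtended at `W` is line-additive, also on lines through `W`, where it vanishes. -/
lemma th_lineAdd (W : ℂ) : LineAdd (fun x y => th (x - W) (y - W)) := by
  intro p d s t r
  simp only
  have hcr : ∀ s t : ℝ, cr (p + s * d - W) (p + t * d - W) = (t - s) * cr (p - W) d := by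
    intro s t
    simp only [cr, Complex.sub_re, Complex.sub_im, Complex.add_re, Complex.add_im,
      Complex.re_ofReal_mul, Complex.im_ofReal_mul]
    ring
  by_cases hk : cr (p - W) d = 0
  · simp [th, hcr, hk]
  have hd : d ≠ 0 := by rintro rfl; simp [cr] at hk
  -- all points of the line lie in one open half-plane bounded by a parallel line through `W`
  obtain ⟨c, hc, him⟩ : ∃ c : ℂ, c ≠ 0 ∧ ∀ s : ℝ, 0 < ((p + s * d - W) / c).im := by
    have e : ∀ s : ℝ, cr d (p + s * d - W) = - cr (p - W) d := by
      intro s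
      simp only [cr, Complex.sub_re, Complex.sub_im, Complex.add_re, Complex.add_im,
        Complex.re_ofReal_mul, Complex.im_ofReal_mul]
      ring
    have hn := Complex.normSq_pos.2 hd
    rcases lt_or_gt_of_ne hk with h | h
    · refine ⟨d, hd, fun s => ?_⟩
      rw [div_im_eq, e]
      exact div_pos (by linarith) hn
    · refine ⟨-d, neg_ne_zero.2 hd, fun s => ?_⟩
      rw [div_neg, Complex.neg_im, div_im_eq, e, neg_div, neg_neg]
      exact div_pos h hn
  have hth : ∀ s t : ℝ, th (p + s * d - W) (p + t * d - W)
      = Complex.arg ((p + t * d - W) / c) - Complex.arg ((p + s * d - W) / c) := by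
    intro s t
    have key : ∀ s : ℝ, p + s * d - W = c * (‖(p + s * d - W) / c‖ *
        cs (Complex.arg ((p + s * d - W) / c))) := by
      intro s
      rw [cs, Complex.norm_mul_exp_arg_mul_I]
      field_simp
    have hpos : ∀ s : ℝ, 0 < ‖(p + s * d - W) / c‖ := by
      intro s
      refine norm_pos_iff.2 fun h => ?_
      have := him s
      rw [h] at this
      simp at this
    have h0 : ∀ s : ℝ, 0 < Complex.arg ((p + s * d - W) / c) := by
      intro s
      refine lt_of_le_of_ne (Complex.arg_nonneg_iff.2 (him s).le) fun h0 => ?_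
      exact (him s).ne' (Complex.arg_eq_zero_iff.1 h0.symm).2
    have h1 : ∀ s : ℝ, Complex.arg ((p + s * d - W) / c) < π := by
      intro s
      refine lt_of_le_of_ne (Complex.arg_le_pi _) fun h0 => ?_
      exact (him s).ne' (Complex.arg_eq_pi_iff.1 h0).2
    have := th_eq hc (hpos s) (hpos t) (a := Complex.arg ((p + s * d - W) / c))
      (b := Complex.arg ((p + t * d - W) / c)) (by linarith [h0 t, h1 s]) (by linarith [h0 s, h1 t])
    rw [← key, ← key] at this
    exact this
  rw [hth, hth, hth]
  ring

/-- Twice the oriented angle is multiplicative, even for dependent vectors. -/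
lemma cs_two_th {z w : ℂ} (hz : z ≠ 0) (hw : w ≠ 0) :
    (w / ‖w‖) ^ 2 = cs (2 * th z w) * (z / ‖z‖) ^ 2 ∧
      (cr z w ≠ 0 → w / ‖w‖ = cs (th z w) * (z / ‖z‖)) := by
  have hz' : (‖z‖ : ℂ) ≠ 0 := by exact_mod_cast norm_ne_zero_iff.2 hz
  have hw' : (‖w‖ : ℂ) ≠ 0 := by exact_mod_cast norm_ne_zero_iff.2 hw
  have key : cr z w ≠ 0 → w / ‖w‖ = cs (th z w) * (z / ‖z‖) := by
    intro h
    have h1 := Complex.norm_mul_exp_arg_mul_I (w / z)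
    rw [th, if_neg h]
    change (‖w / z‖ : ℂ) * cs _ = w / z at h1
    rw [norm_div] at h1
    push_cast at h1
    field_simp at h1 ⊢
    rw [← h1]
  refine ⟨?_, key⟩
  by_cases h : cr z w = 0
  · obtain ⟨t, rfl⟩ := exists_smul_of_cr_eq_zero hz h
    have ht : t ≠ 0 := by rintro rfl; simp at hw
    have ht' : (t:ℂ) ≠ 0 := by exact_mod_cast ht
    rw [th, if_pos h]
    have : ((|t| : ℝ) : ℂ) ^ 2 = (t : ℂ) ^ 2 := by exact_mod_cast sq_abs t
    rw [norm_mul, Complex.norm_real, Real.norm_eq_abs]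
    push_cast
    rw [div_pow, mul_pow, mul_pow, this]
    simp [cs]
    field_simp
  · rw [key h, mul_pow, two_mul, cs_add]
    ring

/-- Around a point, the oriented angles of a positively oriented triangle have a nonnegative sum. -/
lemma th_bd_nonneg_pos {Q : Fin 3 → ℂ} (W : ℂ) (hQ : 0 < ar Q) :
    0 ≤ bd (fun x y => th (x - W) (y - W)) Q := by
  have e1 : (1:Fin 3) + 1 = 2 := rfl
  have e2 : (1:Fin 3) + 2 = 0 := rfl
  have e3 : (2:Fin 3) + 1 = 0 := rfl
  have e4 : (2:Fin 3) + 2 = 1 := rfl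
  simp only [bd, Fin.sum_univ_three, e1, e2, e3, e4, zero_add]
  set z0 := Q 0 - W with h0
  set z1 := Q 1 - W with h1
  set z2 := Q 2 - W with h2
  have hsum : cr z1 z2 + cr z2 z0 + cr z0 z1 = ar Q := by
    simp only [h0, h1, h2, ar, cr, Complex.sub_re, Complex.sub_im]; ring
  have hzero : ∀ z w : ℂ, cr z w = 0 → th z w = 0 := fun z w h => by rw [th, if_pos h]
  have hnn : ∀ z w : ℂ, 0 ≤ cr z w → 0 ≤ th z w := by
    intro z w h
    rcases h.eq_or_lt with h | h
    · rw [hzero z w h.symm]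
    · exact (th_pos h).le
  by_cases hn : 0 ≤ cr z1 z2 ∧ 0 ≤ cr z2 z0 ∧ 0 ≤ cr z0 z1
  · have := hnn _ _ hn.1
    have := hnn _ _ hn.2.1
    have := hnn _ _ hn.2.2
    linarith
  have hz0 : z0 ≠ 0 := by
    intro h
    apply hn
    rw [h] at hsum ⊢
    simp [cr] at hsum ⊢
    linarith
  have hz1 : z1 ≠ 0 := by
    intro h
    apply hn
    rw [h] at hsum ⊢
    simp [cr] at hsum ⊢
    linarith
  have hz2 : z2 ≠ 0 := by
    intro h
    apply hn
    rw [h] at hsum ⊢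
    simp [cr] at hsum ⊢
    linarith
  obtain ⟨a1, b1⟩ := cs_two_th hz1 hz2
  obtain ⟨a2, b2⟩ := cs_two_th hz2 hz0
  obtain ⟨a3, b3⟩ := cs_two_th hz0 hz1
  have hu : (z1 / ‖z1‖ : ℂ) ≠ 0 :=
    div_ne_zero hz1 (by exact_mod_cast norm_ne_zero_iff.2 hz1)
  have hpi := Real.pi_pos
  have g1 := th_gt z1 z2
  have g2 := th_gt z2 z0
  have g3 := th_gt z0 z1
  by_cases hne : cr z1 z2 ≠ 0 ∧ cr z2 z0 ≠ 0 ∧ cr z0 z1 ≠ 0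
  · have h := b3 hne.2.2
    rw [b2 hne.2.1, b1 hne.1, ← mul_assoc, ← mul_assoc, ← cs_add, ← cs_add] at h
    have h' : cs (th z0 z1 + th z2 z0 + th z1 z2) = 1 := by
      have : cs (th z0 z1 + th z2 z0 + th z1 z2) * (z1 / ‖z1‖) = 1 * (z1 / ‖z1‖) := by
        rw [← h, one_mul]
      exact mul_right_cancel₀ hu this
    obtain ⟨m, hm⟩ := Complex.exp_eq_one_iff.1 h'
    have hm' : th z0 z1 + th z2 z0 + th z1 z2 = m * (2 * π) := by
      have := congrArg Complex.im hm
      simpa using this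
    have hlt : -(2 * π) < th z0 z1 + th z2 z0 + th z1 z2 := by
      rcases lt_or_ge 0 (cr z1 z2) with h | h
      · linarith [th_pos h]
      rcases lt_or_ge 0 (cr z2 z0) with h | h
      · linarith [th_pos h]
      have : 0 < cr z0 z1 := by linarith
      linarith [th_pos this]
    have : (-1:ℝ) < m := by nlinarith
    have : (-1:ℤ) < m := by exact_mod_cast this
    have : (0:ℝ) ≤ m := by exact_mod_cast (by omega : (0:ℤ) ≤ m)
    nlinarith
  · have h := a3
    rw [a2, a1, ← mul_assoc, ← mul_assoc, ← cs_add, ← cs_add] at h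
    have h' : cs (2 * th z0 z1 + 2 * th z2 z0 + 2 * th z1 z2) = 1 := by
      have : cs (2 * th z0 z1 + 2 * th z2 z0 + 2 * th z1 z2) * (z1 / ‖z1‖) ^ 2
          = 1 * (z1 / ‖z1‖) ^ 2 := by
        rw [← h, one_mul]
      exact mul_right_cancel₀ (pow_ne_zero 2 hu) this
    obtain ⟨m, hm⟩ := Complex.exp_eq_one_iff.1 h'
    have hm' : 2 * th z0 z1 + 2 * th z2 z0 + 2 * th z1 z2 = m * (2 * π) := by
      have := congrArg Complex.im hm
      simpa using this
    -- one angle is positive, one is zero, and the remaining one exceeds `-π`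
    have hlt : -π < th z0 z1 + th z2 z0 + th z1 z2 := by
      have hne' : cr z1 z2 = 0 ∨ cr z2 z0 = 0 ∨ cr z0 z1 = 0 := by tauto
      rcases lt_or_ge 0 (cr z1 z2) with h | h
      · have := th_pos h
        rcases hne' with h' | h' | h'
        · linarith
        · linarith [hzero _ _ h']
        · linarith [hzero _ _ h']
      rcases lt_or_ge 0 (cr z2 z0) with h | h
      · have := th_pos h
        rcases hne' with h' | h' | h'
        · linarith [hzero _ _ h']
        · linarith
        · linarith [hzero _ _ h']
      have h : 0 < cr z0 z1 := by linarith
      have := th_pos h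
      rcases hne' with h' | h' | h'
      · linarith [hzero _ _ h']
      · linarith [hzero _ _ h']
      · linarith
    have : (-1:ℝ) < m := by nlinarith
    have : (-1:ℤ) < m := by exact_mod_cast this
    have : (0:ℝ) ≤ m := by exact_mod_cast (by omega : (0:ℤ) ≤ m)
    nlinarith

lemma th_bd_nonneg {Q : Fin 3 → ℂ} (W : ℂ) :
    0 ≤ (SignType.sign (ar Q) : ℝ) * bd (fun x y => th (x - W) (y - W)) Q := by
  rcases lt_trichotomy (ar Q) 0 with h | h | h
  · have hs : ar ![Q 0, Q 2, Q 1] = - ar Q := by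
      change cr (Q 2 - Q 0) (Q 1 - Q 0) = _
      rw [cr_anti]; rfl
    have := th_bd_nonneg_pos (Q := ![Q 0, Q 2, Q 1]) W (by rw [hs]; linarith)
    rw [sign_neg h]
    simp only [bd, Fin.sum_univ_three] at *
    change 0 ≤ th (Q 2 - W) (Q 1 - W) + th (Q 1 - W) (Q 0 - W) + th (Q 0 - W) (Q 2 - W) at this
    change 0 ≤ _ * (th (Q 1 - W) (Q 2 - W) + th (Q 2 - W) (Q 0 - W) + th (Q 0 - W) (Q 1 - W))
    rw [th_anti (Q 1 - W), th_anti (Q 0 - W) (Q 1 - W), th_anti (Q 2 - W) (Q 0 - W)] at this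
    simp
    linarith
  · simp [h]
  · rw [sign_pos h]
    simpa using th_bd_nonneg_pos W h

/-! ### Tiles and their conjugates -/

lemma fin3_12 : ∀ k : Fin 3, k + 1 + 2 = k := by decide
lemma fin3_21 : ∀ k : Fin 3, k + 2 + 1 = k := by decide
lemma fin3_11 : ∀ k : Fin 3, k + 1 + 1 = k + 2 := by decide
lemma fin3_22 : ∀ k : Fin 3, k + 2 + 2 = k + 1 := by decide
lemma fin3_3 : ∀ k : Fin 3, k + 3 = k := by decide

lemma fin3_cases : ∀ l k : Fin 3, l = k ∨ l = k + 1 ∨ l = k + 1 + 1 := by decide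

lemma rootU_cs (n : ℕ) (j : ℤ) : rootU n ^ j = cs (π * j / n) := rootU_zpow n j

lemma norm_cs (a : ℝ) : ‖cs a‖ = 1 := Complex.norm_exp_ofReal_mul_I a

lemma cs_pi : cs π = -1 := Complex.exp_pi_mul_I

lemma rootU_pow_n {n : ℕ} (hn : n ≠ 0) : rootU n ^ (n : ℤ) = -1 := by
  rw [rootU_cs, ← cs_pi]
  congr 1
  have : (n : ℝ) ≠ 0 := by exact_mod_cast hn
  push_cast
  field_simp

/-- The directions that are integral multiples of the angle `π / n`. -/
def Good (n : ℕ) (e : ℂ) : Prop := ∃ (τ : ℝ) (j : ℤ), e = τ * rootU n ^ j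

lemma Good.smul {n : ℕ} {e : ℂ} (h : Good n e) (t : ℝ) : Good n (t * e) := by
  obtain ⟨τ, j, rfl⟩ := h
  exact ⟨t * τ, j, by push_cast; ring⟩

lemma good_smul_iff {n : ℕ} {e : ℂ} {t : ℝ} (ht : t ≠ 0) : Good n (t * e) ↔ Good n e := by
  refine ⟨fun h => ?_, fun h => h.smul t⟩
  have := h.smul t⁻¹
  rwa [← mul_assoc, ← Complex.ofReal_mul, inv_mul_cancel₀ ht, Complex.ofReal_one, one_mul] at this

lemma Good.mul_root {n : ℕ} {e : ℂ} (h : Good n e) (i : ℤ) : Good n (rootU n ^ i * e) := by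
  obtain ⟨τ, j, rfl⟩ := h
  refine ⟨τ, i + j, ?_⟩
  rw [zpow_add₀ (rootU_ne_zero n)]
  ring

lemma Good.eq_norm {n : ℕ} (hn : n ≠ 0) {e : ℂ} (h : Good n e) :
    ∃ j : ℤ, e = ‖e‖ * rootU n ^ j := by
  obtain ⟨τ, j, rfl⟩ := h
  have hnorm : ‖(τ : ℂ) * rootU n ^ j‖ = |τ| := by
    rw [norm_mul, rootU_cs, norm_cs, mul_one, Complex.norm_real, Real.norm_eq_abs]
  rw [hnorm]
  rcases le_total 0 τ with h | h
  · exact ⟨j, by rw [abs_of_nonneg h]⟩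
  · refine ⟨j + n, ?_⟩
    rw [abs_of_nonpos h, zpow_add₀ (rootU_ne_zero n), rootU_pow_n hn]
    push_cast
    ring

/-- The orientation of a triangle: the sign of its signed area, as an integer. -/
def ori (P : Fin 3 → ℂ) : ℤ := (SignType.sign (ar P) : ℤ)

lemma ori_real (P : Fin 3 → ℂ) : (ori P : ℝ) = (SignType.sign (ar P) : ℝ) := by
  unfold ori
  rcases lt_trichotomy (ar P) 0 with h | h | h
  · simp [sign_neg h]
  · simp [h]
  · simp [sign_pos h]

lemma ori_eq {P : Fin 3 → ℂ} (hP : ar P ≠ 0) : ori P = 1 ∨ ori P = -1 := by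
  unfold ori
  rcases lt_or_gt_of_ne hP with h | h
  · right; simp [sign_neg h]
  · left; simp [sign_pos h]

/-- The triangle `P` has angle `θ k` at its `k`-th vertex, in terms of rotations. -/
def TileAngles (P : Fin 3 → ℂ) (θ : Fin 3 → ℝ) : Prop :=
  ∀ k, ∃ ρ : ℝ, 0 < ρ ∧ P (k + 2) - P k = ρ * (cs (ori P * θ k) * (P (k + 1) - P k))

lemma tile_next {n : ℕ} (hn : n ≠ 0) {P : Fin 3 → ℂ} {a : Fin 3 → ℤ}
    (hT : TileAngles P (fun k => π * a k / n)) (k : Fin 3) :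
    ∃ ρ : ℝ, 0 < ρ ∧ P k - P (k + 2)
      = ρ * (rootU n ^ ((n : ℤ) - ori P * a (k + 2)) * (P (k + 2) - P (k + 1))) := by
  obtain ⟨ρ, hρ, h⟩ := hT (k + 2)
  rw [fin3_22, fin3_21] at h
  refine ⟨ρ⁻¹, inv_pos.2 hρ, ?_⟩
  rw [zpow_sub₀ (rootU_ne_zero n), rootU_pow_n hn, rootU_cs,
    show π * ((ori P * a (k + 2) : ℤ) : ℝ) / n = ori P * (π * a (k + 2) / n) by push_cast; ring]
  have hρ' : (ρ : ℂ) ≠ 0 := by exact_mod_cast hρ.ne'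
  have := cs_ne_zero (ori P * (π * a (k + 2) / n))
  rw [show P (k + 2) - P (k + 1) = -(P (k + 1) - P (k + 2)) by ring, h]
  beta_reduce
  generalize cs (ori P * (π * a (k + 2) / n)) = C at *
  push_cast
  field_simp

lemma tile_edges {n : ℕ} (hn : n ≠ 0) {P : Fin 3 → ℂ} (hP : ar P ≠ 0) {a : Fin 3 → ℤ}
    (hT : TileAngles P (fun k => π * a k / n)) (hg : ∀ k, Good n (P (k + 2) - P (k + 1))) :
    ∃ j : Fin 3 → ℤ, (∀ k, P (k + 2) - P (k + 1) = ‖P (k + 2) - P (k + 1)‖ * rootU n ^ j k) ∧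
      ∀ k, rootU n ^ j (k + 1) = rootU n ^ (j k + n - ori P * a (k + 2)) := by
  choose j hj using fun k => (hg k).eq_norm hn
  refine ⟨j, hj, fun k => ?_⟩
  obtain ⟨ρ, hρ, h⟩ := tile_next hn hT k
  have h1 := hj (k + 1)
  rw [fin3_12, fin3_11] at h1
  have hnorm : ‖P k - P (k + 2)‖ = ρ * ‖P (k + 2) - P (k + 1)‖ := by
    rw [h, norm_mul, norm_mul, rootU_cs, norm_cs, one_mul, Complex.norm_real, Real.norm_eq_abs,
      abs_of_pos hρ]
  have hne : (‖P (k + 2) - P (k + 1)‖ : ℂ) ≠ 0 := by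
    exact_mod_cast norm_ne_zero_iff.2 (edge_ne P hP k)
  rw [hnorm, h] at h1
  conv_lhs at h1 => rw [hj k]
  have hρ' : (ρ : ℂ) ≠ 0 := by exact_mod_cast hρ.ne'
  rw [add_sub_assoc, zpow_add₀ (rootU_ne_zero n)]
  push_cast at h1
  have h2 : (ρ * ‖P (k + 2) - P (k + 1)‖ : ℂ) ≠ 0 := mul_ne_zero hρ' hne
  apply mul_left_cancel₀ h2
  rw [← h1]
  ring

/-- The sides of a tile are all in good directions as soon as one of them is. -/
lemma tile_good_of_good {n : ℕ} (hn : n ≠ 0) {P : Fin 3 → ℂ} {a : Fin 3 → ℤ}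
    (hT : TileAngles P (fun k => π * a k / n)) {k : Fin 3} (hg : Good n (P (k + 2) - P (k + 1))) :
    ∀ l, Good n (P (l + 2) - P (l + 1)) := by
  have step : ∀ k, Good n (P (k + 2) - P (k + 1)) → Good n (P (k + 1 + 2) - P (k + 1 + 1)) := by
    intro k hk
    obtain ⟨ρ, -, h⟩ := tile_next hn hT k
    rw [fin3_12, fin3_11, h]
    exact (hk.mul_root _).smul ρ
  intro l
  have h1 := step _ hg
  have h2 := step _ h1
  have := fin3_cases l k
  rcases this with rfl | rfl | rfl <;> assumption

lemma odd_of_coprime {n : ℕ} {k : ℤ} (hk : IsCoprime k (2 * n : ℤ)) : Odd k := by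
  have : IsCoprime k 2 := hk.of_mul_right_left
  rw [← Int.not_even_iff_odd]
  intro he
  have h2 : (2:ℤ) ∣ 1 := by
    obtain ⟨u, v, huv⟩ := this
    rw [← huv]
    exact dvd_add (he.two_dvd.mul_left u) (dvd_mul_left 2 v)
  omega

lemma sin_ne_zero_of_coprime {n : ℕ} (hn : n ≠ 0) {k a : ℤ} (hk : IsCoprime k (2 * n : ℤ))
    (ha : 0 < a) (han : a < n) : Real.sin (π * (k * a : ℤ) / n) ≠ 0 := by
  intro h
  obtain ⟨z, hz⟩ := Real.sin_eq_zero_iff.1 h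
  have hn' : (n : ℝ) ≠ 0 := by exact_mod_cast hn
  have h1 : (z * n : ℝ) = ((k * a : ℤ) : ℝ) := by
    have := Real.pi_ne_zero
    field_simp at hz
    linarith
  have h2 : z * n = k * a := by exact_mod_cast h1
  have h3 : (n : ℤ) ∣ k * a := ⟨z, by rw [← h2]; ring⟩
  have h4 : (n : ℤ) ∣ a := (hk.of_mul_right_right.symm).dvd_of_dvd_mul_left h3
  exact absurd (Int.le_of_dvd ha h4) (by omega)

/-- The image of a tile under the conjugation map: every product of consecutive (signed) sides
satisfies the law of sines for the conjugate angles. -/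
lemma image_edges {n : ℕ} (hn : n ≠ 0) {P : Fin 3 → ℂ} (hP : ar P ≠ 0) {a : Fin 3 → ℤ}
    (hT : TileAngles P (fun k => π * a k / n)) (hg : ∀ k, Good n (P (k + 2) - P (k + 1)))
    {κ : ℤ} (hκ : IsCoprime κ (2 * n : ℤ)) {f : ℝ →+ ℝ} {Φ : ℂ →+ ℂ}
    (hf : ∀ k, f ‖P (k + 2) - P (k + 1)‖ ≠ 0)
    (hΦ : ∀ (τ : ℝ) (j : ℤ), Φ (τ * rootU n ^ j) = f τ * rootU n ^ (κ * j)) :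
    ∃ (F : Fin 3 → ℝ) (b : Fin 3 → ℝ), (∀ k, F k ≠ 0) ∧
      (∀ k, Φ (P (k + 2)) - Φ (P (k + 1)) = F k * cs (b k)) ∧
      (∀ k, cs (b (k + 1)) = - cs (b k - ori P * (π * (κ * a (k + 2) : ℤ) / n))) ∧
      (∀ k, ar (fun i => Φ (P i))
        = F k * F (k + 1) * (ori P * Real.sin (π * (κ * a (k + 2) : ℤ) / n))) := by
  obtain ⟨j, hj, hj'⟩ := tile_edges hn hP hT hg
  have hn' : (n : ℝ) ≠ 0 := by exact_mod_cast hn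
  have hedge : ∀ k, Φ (P (k + 2)) - Φ (P (k + 1))
      = f ‖P (k + 2) - P (k + 1)‖ * cs (π * (κ * j k : ℤ) / n) := by
    intro k
    rw [← map_sub]
    conv_lhs => rw [hj k]
    rw [hΦ, rootU_cs]
  have hb : ∀ k, cs (π * (κ * j (k + 1) : ℤ) / n)
      = - cs (π * (κ * j k : ℤ) / n - ori P * (π * (κ * a (k + 2) : ℤ) / n)) := by
    intro k
    rw [← rootU_cs, mul_comm κ, zpow_mul, hj', ← zpow_mul,
      show (j k + n - ori P * a (k + 2)) * κ = κ * (j k - ori P * a (k + 2)) + n * κ by ring,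
      zpow_add₀ (rootU_ne_zero n), zpow_mul _ (n : ℤ), rootU_pow_n hn,
      (odd_of_coprime hκ).neg_one_zpow, mul_neg_one, rootU_cs]
    congr 2
    push_cast
    ring
  refine ⟨_, _, hf, hedge, hb, fun k => ?_⟩
  have h1 := edge_cr (fun i => Φ (P i)) k
  rw [fin3_3, hedge k] at h1
  have h2 := hedge (k + 1)
  rw [fin3_12, fin3_11] at h2
  rw [show Φ (P (k + 1)) - Φ (P k) = -(Φ (P k) - Φ (P (k + 2))) - (Φ (P (k + 2)) - Φ (P (k + 1))) by
    ring, h2, hedge k, hb] at h1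
  have h3 : ∀ x y : ℝ, ∀ u v : ℂ, cr (x * u) (-(y * -v) - x * u) = cr (x * u) (y * v) := by
    intro x y u v
    simp only [cr, Complex.sub_re, Complex.sub_im, Complex.neg_re, Complex.neg_im,
      Complex.re_ofReal_mul, Complex.im_ofReal_mul, mul_neg]
    ring
  rw [h3, cr_smul_cs, sub_sub_cancel_left, Real.sin_neg] at h1
  have h4 : Real.sin (ori P * (π * (κ * a (k + 2) : ℤ) / n))
      = ori P * Real.sin (π * (κ * a (k + 2) : ℤ) / n) := by
    rcases ori_eq hP with h | h <;> simp [h, Real.sin_neg]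
  rw [h4] at h1
  simp only [fin3_12, fin3_11]
  linarith

/-- The orientation of the image of a tile relative to the tile depends only on the angles and on `κ`,
not on the tile: it is the sign of the product of the sines of the conjugate angles. -/
lemma image_sign {n : ℕ} (hn : n ≠ 0) {P : Fin 3 → ℂ} (hP : ar P ≠ 0) {a : Fin 3 → ℤ}
    (ha : ∀ k, 0 < a k) (han : ∀ k, a k < n)
    (hT : TileAngles P (fun k => π * a k / n)) (hg : ∀ k, Good n (P (k + 2) - P (k + 1)))
    {κ : ℤ} (hκ : IsCoprime κ (2 * n : ℤ)) {f : ℝ →+ ℝ} {Φ : ℂ →+ ℂ}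
    (hf : ∀ k, f ‖P (k + 2) - P (k + 1)‖ ≠ 0)
    (hΦ : ∀ (τ : ℝ) (j : ℤ), Φ (τ * rootU n ^ j) = f τ * rootU n ^ (κ * j)) :
    ((SignType.sign (ar fun i => Φ (P i)) : ℝ)
      = ori P * (SignType.sign (∏ k, Real.sin (π * (κ * a k : ℤ) / n)) : ℝ)) := by
  obtain ⟨F, b, hF, -, -, hA⟩ := image_edges hn hP hT hg hκ hf hΦ
  have hS := fun k => sin_ne_zero_of_coprime hn hκ (ha k) (han k)
  set A := ar fun i => Φ (P i)
  set S : Fin 3 → ℝ := fun k => Real.sin (π * (κ * a k : ℤ) / n) with hSdef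
  have hA' : ∀ k, A = F k * F (k + 1) * (ori P * S (k + 2)) := hA
  have h0 := hA' 0
  have h1 := hA' 1
  have h2 := hA' 2
  simp only [show (1:Fin 3) + 1 = 2 from rfl, show (1:Fin 3) + 2 = 0 from rfl,
    show (2:Fin 3) + 1 = 0 from rfl, show (2:Fin 3) + 2 = 1 from rfl, zero_add] at h0 h1 h2
  have ho : (ori P : ℝ) = 1 ∨ (ori P : ℝ) = -1 := by
    rcases ori_eq hP with h | h <;> simp [h]
  have ho2 : (ori P : ℝ) * ori P = 1 := by rcases ho with h | h <;> simp [h]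
  have hprod : ∏ k, Real.sin (π * (κ * a k : ℤ) / n) = S 0 * S 1 * S 2 := Fin.prod_univ_three _
  rw [hprod]
  have hcube : A * A * A = (F 0 * F 1 * F 2) ^ 2 * (ori P * (S 0 * S 1 * S 2)) := by
    calc A * A * A = (F 0 * F 1 * (ori P * S 2)) * (F 1 * F 2 * (ori P * S 0))
          * (F 2 * F 0 * (ori P * S 1)) := by rw [← h0, ← h1, ← h2]
      _ = (ori P * ori P) * ((F 0 * F 1 * F 2) ^ 2 * (ori P * (S 0 * S 1 * S 2))) := by ring
      _ = _ := by rw [ho2, one_mul]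
  have hF2 : 0 < (F 0 * F 1 * F 2) ^ 2 := by
    have := mul_ne_zero (mul_ne_zero (hF 0) (hF 1)) (hF 2)
    positivity
  have hs : SignType.sign A = SignType.sign (ori P * (S 0 * S 1 * S 2)) := by
    have := congrArg SignType.sign hcube
    rw [sign_mul, sign_mul, sign_mul, sign_pos hF2, one_mul] at this
    rw [← this]
    cases SignType.sign A <;> rfl
  rw [hs]
  rcases ho with h | h <;> simp [h]
  rcases lt_trichotomy (S 0 * S 1 * S 2) 0 with h | h | h <;> simp [h, Left.sign_neg]

lemma th_zero_left (z : ℂ) : th 0 z = 0 := by simp [th, cr]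

lemma th_zero_right (z : ℂ) : th z 0 = 0 := by simp [th, cr]

/-- The angle of a positively conjugated tile at its `i`-th vertex is the conjugate angle
`κ a i π / n` reduced modulo `π`. -/
lemma image_corner {n : ℕ} (hn : n ≠ 0) {P : Fin 3 → ℂ} (hP : ar P ≠ 0) {a : Fin 3 → ℤ}
    (ha : ∀ k, 0 < a k) (han : ∀ k, a k < n)
    (hT : TileAngles P (fun k => π * a k / n)) (hg : ∀ k, Good n (P (k + 2) - P (k + 1)))
    {κ : ℤ} (hκ : IsCoprime κ (2 * n : ℤ)) {f : ℝ →+ ℝ} {Φ : ℂ →+ ℂ}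
    (hf : ∀ k, f ‖P (k + 2) - P (k + 1)‖ ≠ 0)
    (hΦ : ∀ (τ : ℝ) (j : ℤ), Φ (τ * rootU n ^ j) = f τ * rootU n ^ (κ * j))
    (hpos : 0 < ori P * ar fun i => Φ (P i)) {i : Fin 3} {W : ℂ} (hW : Φ (P i) = W) :
    ori P * bd (fun x y => th (x - W) (y - W)) (fun i => Φ (P i))
      = π * Int.fract ((κ : ℝ) * (a i / n)) := by
  obtain ⟨F, b, hF, hE, hb, hA⟩ := image_edges hn hP hT hg hκ hf hΦ
  have hS := sin_ne_zero_of_coprime hn hκ (ha i) (han i)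
  have hn' : (n : ℝ) ≠ 0 := by exact_mod_cast hn
  have hbd : bd (fun x y => th (x - W) (y - W)) (fun i => Φ (P i))
      = th (Φ (P (i + 1)) - W) (Φ (P (i + 2)) - W) := by
    unfold bd
    rw [Finset.sum_eq_single i]
    · intro l _ hl
      subst hW
      rcases fin3_cases i l with rfl | rfl | rfl
      · exact absurd rfl hl
      · simp [th_zero_left]
      · simp only [fin3_11, sub_self, th_zero_right]
    · simp
  set φ := Int.fract ((κ : ℝ) * (a i / n)) with hφ
  set q := ⌊(κ : ℝ) * (a i / n)⌋ with hq
  have hfl : (κ : ℝ) * (a i / n) = q + φ := (Int.floor_add_fract _).symm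
  have hy : π * (κ * a i : ℤ) / n = π * φ + q * π := by
    have : π * (κ * a i : ℤ) / n = π * ((κ : ℝ) * (a i / n)) := by push_cast; ring
    rw [this, hfl]; ring
  have hA1 := hA (i + 1)
  have hb1 := hb (i + 1)
  have hE1 := hE (i + 1)
  have hE2 := hE (i + 2)
  simp only [fin3_11, fin3_12, fin3_21, fin3_22, fin3_3] at hA1 hb1 hE1 hE2
  have ho : ((ori P : ℝ) = 1 ∧ ori P = 1) ∨ ((ori P : ℝ) = -1 ∧ ori P = -1) := by
    rcases ori_eq hP with h | h <;> simp [h]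
  have hφ0 : 0 ≤ φ := Int.fract_nonneg _
  have hφ1 : φ < 1 := Int.fract_lt_one _
  have hpi := Real.pi_pos
  have hee : ∀ x : ℝ, cs (x + q * π) = ((-1) ^ q : ℝ) * cs x ∧
      cs (x - q * π) = ((-1) ^ q : ℝ) * cs x := by
    intro x
    constructor <;> apply Complex.ext <;>
    simp only [Complex.re_ofReal_mul, Complex.im_ofReal_mul, cs_re, cs_im,
      Real.cos_add_int_mul_pi, Real.sin_add_int_mul_pi, Real.cos_sub_int_mul_pi,
      Real.sin_sub_int_mul_pi]
  set e : ℝ := (-1) ^ q with he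
  rw [hy] at hA1 hb1 hS
  rw [Real.sin_add_int_mul_pi, ← he] at hA1 hS
  have hsin : 0 < Real.sin (π * φ) :=
    lt_of_le_of_ne (Real.sin_nonneg_of_nonneg_of_le_pi (by positivity) (by nlinarith))
      (right_ne_zero_of_mul hS).symm
  have hcs : cs (ori P * (π * φ + q * π)) = e * cs (ori P * (π * φ)) := by
    rcases ho with ⟨h, -⟩ | ⟨h, -⟩
    · rw [h, one_mul, one_mul, (hee _).1]
    · rw [h, ← (hee _).2]; congr 1; ring
  have hoo : (ori P : ℝ) * ori P = 1 := by rcases ho with ⟨h, -⟩ | ⟨h, -⟩ <;> simp [h]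
  have hFe : 0 < F (i + 1) * F (i + 2) * e := by
    rw [hA1] at hpos
    have : (ori P : ℝ) * (F (i + 1) * F (i + 2) * (ori P * (e * Real.sin (π * φ))))
        = (ori P * ori P) * (F (i + 1) * F (i + 2) * e * Real.sin (π * φ)) := by ring
    rw [this, hoo, one_mul] at hpos
    exact pos_of_mul_pos_left hpos hsin.le
  have hF1 := hF (i + 1)
  have hF2 := hF (i + 2)
  have hratio : 0 < F (i + 1) * e / F (i + 2) := by
    have : F (i + 1) * e / F (i + 2) = F (i + 1) * F (i + 2) * e / F (i + 2) ^ 2 := by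
      field_simp
    rw [this]
    positivity
  have hv2 : Φ (P (i + 2)) - W
      = (F (i + 2) * cs (b (i + 2))) * ((F (i + 1) * e / F (i + 2) : ℝ) * cs (ori P * (π * φ))) := by
    have h1 : cs (b (i + 1)) = - (cs (b (i + 2)) * (e * cs (ori P * (π * φ)))) := by
      rw [← hcs, hb1, neg_mul, neg_neg, ← cs_add, sub_add_cancel]
    have hF2c : (F (i + 2) : ℂ) ≠ 0 := by exact_mod_cast hF2
    rw [← hW, show Φ (P (i + 2)) - Φ (P i) = -(Φ (P i) - Φ (P (i + 2))) by ring, hE1, h1]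
    push_cast
    field_simp
  have hv1 : Φ (P (i + 1)) - W = (F (i + 2) * cs (b (i + 2))) * ((1 : ℝ) * cs 0) := by
    rw [← hW, hE2]
    simp [cs]
  have hlt : π * φ < π := by nlinarith
  have hpos' : 0 ≤ π * φ := by positivity
  have hc : (F (i + 2) * cs (b (i + 2)) : ℂ) ≠ 0 :=
    mul_ne_zero (by exact_mod_cast hF2) (cs_ne_zero _)
  rw [hbd, hv1, hv2, th_eq hc one_pos hratio, sub_zero, ← mul_assoc, hoo, one_mul]
  · rcases ho with ⟨h, -⟩ | ⟨h, -⟩ <;> rw [h] <;> linarith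
  · rcases ho with ⟨h, -⟩ | ⟨h, -⟩ <;> rw [h] <;> linarith

/-! ### Line-additive functionals detecting directions and conjugate angles -/

lemma good_zero (n : ℕ) : Good n 0 := ⟨0, 0, by simp⟩

lemma good_line_iff {n : ℕ} {p v : ℂ} {s t : ℝ} (hv : ¬ Good n v) :
    Good n (p + t * v - (p + s * v)) ↔ t = s := by
  have e : p + t * v - (p + s * v) = ((t - s : ℝ) : ℂ) * v := by push_cast; ring
  rw [e]
  constructor
  · intro h
    by_contra hne
    exact hv ((good_smul_iff (sub_ne_zero.2 hne)).1 h)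
  · rintro rfl
    simpa using good_zero n

lemma good_line {n : ℕ} {p v : ℂ} {s t : ℝ} (hv : Good n v) :
    Good n (p + t * v - (p + s * v)) := by
  have e : p + t * v - (p + s * v) = ((t - s : ℝ) : ℂ) * v := by push_cast; ring
  rw [e]
  exact hv.smul _

open Classical in
/-- The area form, restricted to segments in bad directions. -/
def badArea (n : ℕ) (x y : ℂ) : ℝ := if Good n (y - x) then 0 else cr x y

lemma badArea_lineAdd (n : ℕ) : LineAdd (badArea n) := by
  intro p v s t r
  by_cases hv : Good n v
  · simp only [badArea, if_pos (good_line hv), add_zero]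
  · have key : ∀ s t : ℝ, badArea n (p + s * v) (p + t * v) = (t - s) * cr p v := by
      intro s t
      rw [badArea, good_line_iff hv]
      split_ifs with h
      · rw [h]; ring
      · simp only [cr, Complex.add_re, Complex.add_im, Complex.re_ofReal_mul,
          Complex.im_ofReal_mul]
        ring
    rw [key, key, key]
    ring

lemma th_self (z : ℂ) : th z z = 0 := by
  have h := th_anti z z
  linarith

open Classical in
/-- The angle at `W` subtended by the image of a segment under `Φ`, for segments in good
directions. -/
def goodAngle (n : ℕ) (Φ : ℂ →+ ℂ) (W x y : ℂ) : ℝ :=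
  if Good n (y - x) then th (Φ x - W) (Φ y - W) else 0

lemma goodAngle_lineAdd {n : ℕ} {κ : ℤ} {f : ℝ →+ ℝ} {Φ : ℂ →+ ℂ}
    (hΦ : ∀ (τ : ℝ) (j : ℤ), Φ (τ * rootU n ^ j) = f τ * rootU n ^ (κ * j)) (W : ℂ) :
    LineAdd (goodAngle n Φ W) := by
  intro p v s t r
  by_cases hv : Good n v
  · simp only [goodAngle, if_pos (good_line hv)]
    obtain ⟨τ, j, rfl⟩ := hv
    have key : ∀ s : ℝ, Φ (p + s * (τ * rootU n ^ j)) = Φ p + (f (s * τ) : ℝ) * rootU n ^ (κ * j) := by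
      intro s
      rw [map_add, ← mul_assoc, ← Complex.ofReal_mul, hΦ]
    rw [key, key, key]
    exact th_lineAdd W (Φ p) (rootU n ^ (κ * j)) _ _ _
  · have key : ∀ s t : ℝ, goodAngle n Φ W (p + s * v) (p + t * v) = 0 := by
      intro s t
      rw [goodAngle, good_line_iff hv]
      split_ifs with h
      · rw [h, th_self]
      · rfl
    rw [key, key, key]
    ring

lemma cV_sub (N j : ℕ) : cV N (j + 1) - cV N j
    = (2 * Real.sin (π / N) : ℝ) * cs (π * (2 * j + 1) / N + π / 2) := by
  have e1 : 2 * π * ((j + 1 : ℕ) : ℝ) / N = π * (2 * j + 1) / N + π / N := by push_cast; ring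
  have e2 : 2 * π * (j : ℝ) / N = π * (2 * j + 1) / N - π / N := by ring
  unfold cV
  rw [e1, e2]
  apply Complex.ext <;>
  · simp only [Complex.sub_re, Complex.sub_im, Complex.re_ofReal_mul, Complex.im_ofReal_mul, cs_re,
      cs_im, Real.cos_add, Real.cos_sub, Real.sin_add, Real.sin_sub, Real.cos_pi_div_two,
      Real.sin_pi_div_two]
    ring

lemma cV_edge_good {N n : ℕ} (hN : 3 ≤ N) (hn : n ≠ 0) (hNn : 2 * N ∣ n) (j : ℕ) :
    Good n (cV N (j + 1) - cV N j) := by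
  obtain ⟨q, rfl⟩ := hNn
  have hN' : (N : ℝ) ≠ 0 := by exact_mod_cast (by omega : N ≠ 0)
  have hq : (q : ℝ) ≠ 0 := by
    intro h
    exact hn (by simp [Nat.cast_eq_zero.1 h])
  refine ⟨2 * Real.sin (π / N), 2 * q * (2 * j + 1) + N * q, ?_⟩
  rw [cV_sub, rootU_cs]
  congr 2
  push_cast
  field_simp

lemma sum_cr_eq_ar (P : Fin 3 → ℂ) : bd cr P = ar P := by
  change ∑ k : Fin 3, cr (P (k + 1)) (P (k + 2)) = cr (P 1 - P 0) (P 2 - P 0)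
  rw [Fin.sum_univ_three]
  change cr (P 1) (P 2) + cr (P 2) (P 0) + cr (P 0) (P 1) = _
  simp only [cr, Complex.sub_re, Complex.sub_im]
  ring

lemma sign_mul_self_real (x : ℝ) : (SignType.sign x : ℝ) * x = |x| := by
  rcases lt_trichotomy x 0 with h | h | h
  · simp [sign_neg h, abs_of_neg h]
  · simp [h]
  · simp [sign_pos h, abs_of_pos h]

/-- All sides of all tiles lie in good directions: the directions of the three sides of a tile are
simultaneously good or bad, and the total area of the bad tiles is computed by `badArea` along the
boundary of the polygon, where it vanishes. -/
lemma all_good {N n m : ℕ} (hN : 3 ≤ N) (hn : n ≠ 0) (hNn : 2 * N ∣ n) {P : Fin m → Fin 3 → ℂ}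
    (hP : ∀ t, ar (P t) ≠ 0)
    (hB : ∀ E : ℂ → ℂ → ℝ, LineAdd E → ∑ t, (SignType.sign (ar (P t)) : ℝ) * bd E (P t)
      = ∑ j ∈ Finset.range N, E (cV N j) (cV N (j + 1)))
    {a : Fin 3 → ℤ} (hT : ∀ t, TileAngles (P t) (fun k => π * a k / n)) :
    ∀ t k, Good n (P t (k + 2) - P t (k + 1)) := by
  have h := hB _ (badArea_lineAdd n)
  rw [Finset.sum_eq_zero (s := Finset.range N)] at h
  swap
  · intro j _
    rw [badArea, if_pos (cV_edge_good hN hn hNn j)]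
  have hterm : ∀ t, (¬ ∀ k, Good n (P t (k + 2) - P t (k + 1))) →
      (SignType.sign (ar (P t)) : ℝ) * bd (badArea n) (P t) = |ar (P t)| := by
    intro t ht
    rw [← sign_mul_self_real, ← sum_cr_eq_ar]
    congr 1
    refine Finset.sum_congr rfl fun k _ => ?_
    rw [badArea, if_neg]
    exact fun hk => ht (tile_good_of_good hn (hT t) hk)
  have hnn : ∀ t ∈ Finset.univ, 0 ≤ (SignType.sign (ar (P t)) : ℝ) * bd (badArea n) (P t) := by
    intro t _
    by_cases ht : ∀ k, Good n (P t (k + 2) - P t (k + 1))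
    · rw [bd, Finset.sum_eq_zero, mul_zero]
      intro k _
      rw [badArea, if_pos (ht k)]
    · rw [hterm t ht]
      exact abs_nonneg _
  intro t
  by_contra ht
  have h0 := (Finset.sum_eq_zero_iff_of_nonneg hnn).1 h t (Finset.mem_univ t)
  rw [hterm t ht] at h0
  exact hP t (abs_eq_zero.1 h0)

/-! ### The conjugate star polygon -/

/-- Exactly one of `N` consecutive integers is divisible by `N`. -/
lemma sum_dvd_indicator {N : ℕ} (hN : 0 < N) (c : ℤ) (x : ℝ) :
    ∑ j ∈ Finset.range N, (if (N : ℤ) ∣ j + c then x else 0) = x := by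
  have hN' : (0:ℤ) < N := by exact_mod_cast hN
  have h0 := Int.emod_nonneg (-c) hN'.ne'
  have h1 := Int.emod_lt_of_pos (-c) hN'
  rw [Finset.sum_eq_single ((-c) % N).toNat]
  · rw [if_pos]
    rw [Int.toNat_of_nonneg h0]
    have := Int.emod_add_mul_ediv (-c) N
    exact ⟨-(-c / N), by linarith⟩
  · intro j hj hne
    rw [if_neg]
    rintro ⟨r, hr⟩
    apply hne
    have hj' := Finset.mem_range.1 hj
    have : (-c) % N = j := by
      rw [show -c = j + N * (-r) by linarith, Int.add_mul_emod_self_left]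
      exact Int.emod_eq_of_lt (by positivity) (by exact_mod_cast hj')
    rw [this, Int.toNat_natCast]
  · intro h
    exact absurd (Finset.mem_range.2 (by omega)) h

/-- Seen from one of its vertices, the boundary of the star polygon with vertices
`exp (2 π i κ j / N)` subtends the total angle `π - 2 π {κ / N}`. -/
lemma starPolygon_sum {N : ℕ} (hN : 3 ≤ N) {κ : ℤ} (hκ : IsCoprime κ (N : ℤ)) (j0 : ℕ) :
    ∑ j ∈ Finset.range N, th (cs (2 * π * (κ * j) / N) - cs (2 * π * (κ * j0) / N))
        (cs (2 * π * (κ * (j + 1)) / N) - cs (2 * π * (κ * j0) / N))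
      = π * (1 - 2 * Int.fract ((κ : ℝ) / N)) := by
  have hN' : (N : ℝ) ≠ 0 := by exact_mod_cast (by omega : N ≠ 0)
  have hpi := Real.pi_pos
  set fr : ℤ → ℝ := fun l => Int.fract ((κ : ℝ) * l / N) with hfr
  set C : ℂ := 2 * Complex.I * cs (2 * π * (κ * j0) / N) with hC
  have hC0 : C ≠ 0 := mul_ne_zero (mul_ne_zero two_ne_zero Complex.I_ne_zero) (cs_ne_zero _)
  have hz : ∀ x : ℝ, ∀ l : ℤ, x = l + j0 →
      cs (2 * π * (κ * x) / N) - cs (2 * π * (κ * j0) / N)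
        = C * (Real.sin (π * fr l) * cs (π * fr l)) := by
    intro x l hx
    have h1 : (κ : ℝ) * l / N = fr l + ⌊(κ : ℝ) * l / N⌋ := by
      rw [add_comm]; exact (Int.floor_add_fract _).symm
    set q := ⌊(κ : ℝ) * l / N⌋
    have h2 : 2 * π * (κ * x) / N = 2 * π * (κ * j0) / N + 2 * (π * fr l) + q * (2 * π) := by
      rw [hx, show 2 * π * (κ * (l + j0)) / N = 2 * π * (κ * j0) / N + 2 * π * (κ * l / N) by ring,
        h1]
      ring
    rw [h2, cs_add, cs_add]
    have h3 : cs (q * (2 * π)) = 1 := by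
      apply Complex.ext
      · rw [cs_re, Real.cos_int_mul_two_pi]; rfl
      · rw [cs_im, show (q : ℝ) * (2 * π) = ((2 * q : ℤ) : ℝ) * π by push_cast; ring,
          Real.sin_int_mul_pi]; rfl
    have h4 : cs (2 * (π * fr l)) - 1 = 2 * Complex.I * (Real.sin (π * fr l) * cs (π * fr l)) := by
      have := Real.sin_sq_add_cos_sq (π * fr l)
      have hI : ∀ (r : ℝ) (w : ℂ), (2 * Complex.I * (r * w)).re = -2 * (r * w.im) ∧
          (2 * Complex.I * (r * w)).im = 2 * (r * w.re) := by
        intro r w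
        constructor <;> simp
      apply Complex.ext
      · rw [(hI _ _).1, Complex.sub_re, cs_re, cs_im, Complex.one_re, Real.cos_two_mul]
        linarith
      · rw [(hI _ _).2, Complex.sub_im, cs_im, cs_re, Complex.one_im, Real.sin_two_mul]
        ring
    rw [h3, mul_one, hC]
    linear_combination cs (2 * π * (κ * j0) / N) * h4
  have hfr0 : ∀ l, 0 ≤ fr l := fun l => Int.fract_nonneg _
  have hfr1 : ∀ l, fr l < 1 := fun l => Int.fract_lt_one _
  have hper : ∀ l, fr (l + N) = fr l := by
    intro l
    simp only [hfr]
    rw [show (κ : ℝ) * (l + N : ℤ) / N = κ * l / N + κ by push_cast; field_simp]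
    exact Int.fract_add_intCast _ _
  have hdvd : ∀ l, fr l = 0 ↔ (N : ℤ) ∣ l := by
    intro l
    simp only [hfr]
    rw [Int.fract_eq_zero_iff]
    constructor
    · rintro ⟨r, hr⟩
      have h1 : (r : ℝ) * N = κ * l := by rw [hr]; field_simp
      have h2 : r * N = κ * l := by exact_mod_cast h1
      exact hκ.symm.dvd_of_dvd_mul_left ⟨r, by rw [← h2]; ring⟩
    · rintro ⟨r, rfl⟩
      exact ⟨κ * r, by push_cast; field_simp⟩
  have hmul : ∀ r : ℤ, fr (N * r) = 0 := fun r => (hdvd _).2 ⟨r, rfl⟩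
  have hshift : ∀ l c : ℤ, (N : ℤ) ∣ l → fr (l + c) = fr c := by
    rintro _ c ⟨r, rfl⟩
    simp only [hfr]
    rw [show (κ : ℝ) * (N * r + c : ℤ) / N = κ * c / N + (κ * r : ℤ) by push_cast; field_simp; ring]
    exact Int.fract_add_intCast _ _
  set φ := Int.fract ((κ : ℝ) / N) with hφ
  have hfr_one : fr 1 = φ := by simp [hfr, hφ]
  have hN1 : ¬ (N : ℤ) ∣ 1 := by
    intro h
    have := Int.le_of_dvd one_pos h
    omega
  have hφ0 : φ ≠ 0 := by rw [← hfr_one, Ne, hdvd]; exact hN1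
  have hfr_neg : fr (-1) = 1 - φ := by
    simp only [hfr, hφ]
    rw [show (κ : ℝ) * (-1 : ℤ) / N = -(κ / N) by push_cast; ring, Int.fract_neg hφ0]
  have hterm : ∀ l : ℤ, th (C * (Real.sin (π * fr l) * cs (π * fr l)))
      (C * (Real.sin (π * fr (l + 1)) * cs (π * fr (l + 1))))
      = π * (fr (l + 1) - fr l) + ((if (N : ℤ) ∣ l then - (π * φ) else 0)
        + if (N : ℤ) ∣ l + 1 then π * (1 - φ) else 0) := by
    intro l
    by_cases h1 : (N : ℤ) ∣ l
    · have h2 : ¬ (N : ℤ) ∣ l + 1 := fun h => hN1 ((dvd_add_right h1).1 h)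
      rw [if_pos h1, if_neg h2, hshift l 1 h1, hfr_one, (hdvd l).2 h1]
      simp [th_zero_left]
    by_cases h2 : (N : ℤ) ∣ l + 1
    · have h3 : fr l = 1 - φ := by
        rw [← hfr_neg, ← hshift (l + 1) (-1) h2, add_neg_cancel_right]
      rw [if_neg h1, if_pos h2, h3, (hdvd _).2 h2]
      simp only [mul_zero, Real.sin_zero, Complex.ofReal_zero, zero_mul, th_zero_right]
      ring
    · rw [if_neg h1, if_neg h2]
      have hp : ∀ l, ¬ (N : ℤ) ∣ l → 0 < Real.sin (π * fr l) := by
        intro l hl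
        have : 0 < fr l := lt_of_le_of_ne (hfr0 l) fun h => hl ((hdvd l).1 h.symm)
        exact Real.sin_pos_of_pos_of_lt_pi (by positivity) (by nlinarith [hfr1 l])
      rw [th_eq hC0 (hp l h1) (hp _ h2)]
      · ring
      · nlinarith [hfr0 (l + 1), hfr1 l]
      · nlinarith [hfr0 l, hfr1 (l + 1)]
  have hsum : ∀ j ∈ Finset.range N,
      th (cs (2 * π * (κ * j) / N) - cs (2 * π * (κ * j0) / N))
        (cs (2 * π * (κ * (j + 1)) / N) - cs (2 * π * (κ * j0) / N))
      = (π * fr ((j + 1 : ℕ) - j0) - π * fr (j - j0))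
        + ((if (N : ℤ) ∣ j + (-j0) then - (π * φ) else 0)
        + if (N : ℤ) ∣ j + (1 - j0) then π * (1 - φ) else 0) := by
    intro j _
    have h := hterm (j - j0)
    rw [← hz j (j - j0) (by push_cast; ring), ← hz (j + 1) (j - j0 + 1) (by push_cast; ring)] at h
    rw [h, show (j : ℤ) - j0 + 1 = (j + 1 : ℕ) - j0 by push_cast; ring,
      show (j : ℤ) + (1 - j0) = (j + 1 : ℕ) - j0 by push_cast; ring, ← sub_eq_add_neg]
    ring
  rw [Finset.sum_congr rfl hsum, Finset.sum_add_distrib, Finset.sum_add_distrib,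
    sum_dvd_indicator (by omega), sum_dvd_indicator (by omega),
    Finset.sum_range_sub (fun j : ℕ => π * fr (j - j0)),
    show (N : ℤ) - j0 = (0 : ℕ) - j0 + N by push_cast; ring, hper]
  ring

/-! ### The conjugate angle inequality at a vertex -/

/-- The conjugation map sends the vertices of the polygon to those of the star polygon. -/
lemma conj_cV {N n : ℕ} (hN : 3 ≤ N) (hn : n ≠ 0) (hNn : 2 * N ∣ n) {κ : ℤ}
    {f : ℝ →+ ℝ} {Φ : ℂ →+ ℂ} (hf1 : f 1 = 1)
    (hΦ : ∀ (τ : ℝ) (j : ℤ), Φ (τ * rootU n ^ j) = f τ * rootU n ^ (κ * j)) (j : ℕ) :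
    Φ (cV N j) = cs (2 * π * (κ * j) / N) := by
  obtain ⟨q, rfl⟩ := hNn
  have hN' : (N : ℝ) ≠ 0 := by exact_mod_cast (by omega : N ≠ 0)
  have hq : (q : ℝ) ≠ 0 := by
    intro h
    exact hn (by simp [Nat.cast_eq_zero.1 h])
  have h := hΦ 1 (4 * q * j)
  rw [hf1, Complex.ofReal_one, one_mul, one_mul, rootU_cs, rootU_cs] at h
  have e1 : π * ((4 * q * j : ℤ) : ℝ) / (2 * N * q : ℕ) = 2 * π * j / N := by
    push_cast; field_simp; ring
  have e2 : π * ((κ * (4 * q * j) : ℤ) : ℝ) / (2 * N * q : ℕ) = 2 * π * (κ * j) / N := by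
    push_cast; field_simp; ring
  rw [e1, e2] at h
  exact h

lemma vertex_injective {P : Fin 3 → ℂ} (hP : ar P ≠ 0) : Function.Injective P := by
  intro i k h
  by_contra hne
  rcases fin3_cases k i with rfl | rfl | rfl
  · exact hne rfl
  · have := edge_ne P hP (i + 2)
    rw [fin3_22, fin3_21, h] at this
    exact this (sub_self _)
  · have := edge_ne P hP (i + 1)
    rw [fin3_12, h] at this
    exact this (sub_self _)

open Classical in
/-- Conjugating the sum of the angles at a vertex of the polygon. The conjugates of the tiles all
have the same orientation relative to the original tiles; as the conjugate polygon subtends a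
positive angle at the vertex, this relative orientation is positive, so every conjugate tile
contributes a nonnegative angle and the tiles at the vertex contribute their conjugate angles. -/
lemma conj_vertex_inequality {N n m : ℕ} (hN : 3 ≤ N) (hn : n ≠ 0) (hNn : 2 * N ∣ n)
    {P : Fin m → Fin 3 → ℂ} (hP : ∀ t, ar (P t) ≠ 0)
    (hB : ∀ E : ℂ → ℂ → ℝ, LineAdd E → ∑ t, (SignType.sign (ar (P t)) : ℝ) * bd E (P t)
      = ∑ j ∈ Finset.range N, E (cV N j) (cV N (j + 1)))
    {a : Fin 3 → ℤ} (ha : ∀ k, 0 < a k) (han : ∀ k, a k < n)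
    (hT : ∀ t, TileAngles (P t) (fun k => π * a k / n))
    {κ : ℤ} (hκ : IsCoprime κ (2 * n : ℤ)) (hκN : Int.fract ((κ : ℝ) / N) < 1 / 2) (j0 : ℕ) :
    ∑ i, (Nat.card {t // P t i = cV N j0} : ℝ) * Int.fract ((κ : ℝ) * (a i / n))
      ≤ 1 - 2 * Int.fract ((κ : ℝ) / N) := by
  have hgood := all_good hN hn hNn hP hB hT
  obtain ⟨f, Φ, hf1, hfS, hΦ⟩ := exists_conjugation hn ((dvd_mul_right 2 N).trans hNn) hκ
    (Finset.univ.image fun x : Fin m × Fin 3 => ‖P x.1 (x.2 + 2) - P x.1 (x.2 + 1)‖) (by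
      intro s hs
      obtain ⟨x, -, rfl⟩ := Finset.mem_image.1 hs
      exact norm_ne_zero_iff.2 (edge_ne _ (hP _) _))
  have hf : ∀ t k, f ‖P t (k + 2) - P t (k + 1)‖ ≠ 0 := fun t k =>
    hfS _ (Finset.mem_image.2 ⟨(t, k), Finset.mem_univ _, rfl⟩)
  set W := Φ (cV N j0) with hW
  set θ : ℂ → ℂ → ℝ := fun x y => th (x - W) (y - W) with hθ
  set Q : Fin m → Fin 3 → ℂ := fun t i => Φ (P t i) with hQ
  have hκN' : IsCoprime κ (N : ℤ) := by
    have hd : (N : ℤ) ∣ 2 * n :=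
      Dvd.dvd.mul_left (Int.natCast_dvd_natCast.2 ((dvd_mul_left N 2).trans hNn)) 2
    exact hκ.of_isCoprime_of_dvd_right hd
  have hpi := Real.pi_pos
  have hsum : ∑ t, (ori (P t) : ℝ) * bd θ (Q t) = π * (1 - 2 * Int.fract ((κ : ℝ) / N)) := by
    rw [← starPolygon_sum hN hκN' j0]
    have h := hB _ (goodAngle_lineAdd hΦ W)
    convert h using 1
    · refine Finset.sum_congr rfl fun t _ => ?_
      rw [ori_real]
      congr 1
      refine Finset.sum_congr rfl fun k _ => ?_
      rw [goodAngle, if_pos (hgood t k)]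
    · refine Finset.sum_congr rfl fun j _ => ?_
      rw [goodAngle, if_pos (cV_edge_good hN hn hNn j), hW, conj_cV hN hn hNn hf1 hΦ,
        conj_cV hN hn hNn hf1 hΦ, conj_cV hN hn hNn hf1 hΦ]
      push_cast
      rfl
  have hsign : ∀ t, (SignType.sign (ar (Q t)) : ℝ)
      = ori (P t) * (SignType.sign (∏ k, Real.sin (π * (κ * a k : ℤ) / n)) : ℝ) := fun t =>
    image_sign hn (hP t) ha han (hT t) (hgood t) hκ (hf t) hΦ
  have hnn : ∀ t, 0 ≤ (SignType.sign (ar (Q t)) : ℝ) * bd θ (Q t) := fun t => th_bd_nonneg W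
  have hε : (SignType.sign (∏ k, Real.sin (π * (κ * a k : ℤ) / n)) : ℝ) = 1 := by
    have hS : ∏ k, Real.sin (π * (κ * a k : ℤ) / n) ≠ 0 :=
      Finset.prod_ne_zero_iff.2 fun k _ => sin_ne_zero_of_coprime hn hκ (ha k) (han k)
    rcases lt_or_gt_of_ne hS with h | h
    · exfalso
      have h2 : ∑ t, (ori (P t) : ℝ) * bd θ (Q t) ≤ 0 := by
        refine Finset.sum_nonpos fun t _ => ?_
        have h3 := hnn t
        rw [hsign, sign_neg h] at h3
        simp at h3
        linarith
      rw [hsum] at h2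
      have : 0 < π * (1 - 2 * Int.fract ((κ : ℝ) / N)) := mul_pos hpi (by linarith)
      linarith
    · rw [sign_pos h]; simp
  simp only [hε, mul_one] at hsign
  have hterm : ∀ t, ∑ i, (if P t i = cV N j0 then π * Int.fract ((κ : ℝ) * (a i / n)) else 0)
      ≤ (ori (P t) : ℝ) * bd θ (Q t) := by
    intro t
    by_cases h : ∃ i, P t i = cV N j0
    · obtain ⟨i, hi⟩ := h
      rw [Finset.sum_eq_single i, if_pos hi]
      · refine (image_corner hn (hP t) ha han (hT t) (hgood t) hκ (hf t) hΦ ?_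
          (by rw [hi])).ge
        rw [← hsign t, sign_mul_self_real, abs_pos]
        intro h0
        have := hsign t
        rw [show ar (Q t) = 0 from h0] at this
        rcases ori_eq (hP t) with h | h <;> simp [h] at this
      · intro k _ hk
        rw [if_neg]
        intro h
        exact hk (vertex_injective (hP t) (h.trans hi.symm))
      · simp
    · rw [Finset.sum_eq_zero]
      · rw [← hsign]; exact hnn t
      · intro i _
        rw [if_neg fun h' => h ⟨i, h'⟩]
  have hle := Finset.sum_le_sum fun t (_ : t ∈ Finset.univ) => hterm t
  rw [hsum, Finset.sum_comm] at hle
  have hcard : ∀ i, ∑ t, (if P t i = cV N j0 then π * Int.fract ((κ : ℝ) * (a i / n)) else 0)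
      = π * ((Nat.card {t // P t i = cV N j0} : ℝ) * Int.fract ((κ : ℝ) * (a i / n))) := by
    intro i
    rw [← Finset.sum_filter, Finset.sum_const, nsmul_eq_mul, Nat.card_eq_fintype_card,
      Fintype.card_subtype]
    ring
  rw [Finset.sum_congr rfl fun i _ => hcard i, ← Finset.mul_sum] at hle
  exact le_of_mul_le_mul_left hle hpi

/-- A tiling of the regular polygon by triangles with angles `π a i / n` has at most two tile
corners at each vertex of the polygon. -/
lemma card_le_two {N n m : ℕ} (hN : 3 ≤ N) (hN6 : N ≠ 6) (hn : n ≠ 0) (hNn : 2 * N ∣ n)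
    {P : Fin m → Fin 3 → ℂ} (hP : ∀ t, ar (P t) ≠ 0)
    (hB : ∀ E : ℂ → ℂ → ℝ, LineAdd E → ∑ t, (SignType.sign (ar (P t)) : ℝ) * bd E (P t)
      = ∑ j ∈ Finset.range N, E (cV N j) (cV N (j + 1)))
    {a : Fin 3 → ℤ} (ha : ∀ k, 0 < a k) (hsum : a 0 + a 1 + a 2 = n)
    (hT : ∀ t, TileAngles (P t) (fun k => π * a k / n)) (j0 : ℕ) :
    Nat.card {t // P t 0 = cV N j0} + Nat.card {t // P t 1 = cV N j0}
      + Nat.card {t // P t 2 = cV N j0} ≤ 2 := by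
  by_contra hgt
  have hn' : (0 : ℝ) < n := by exact_mod_cast Nat.pos_of_ne_zero hn
  have hN' : (3 : ℝ) ≤ N := by exact_mod_cast hN
  have han : ∀ k, a k < n := by
    intro k
    have h0 := ha 0
    have h1 := ha 1
    have h2 := ha 2
    fin_cases k <;> simp <;> omega
  have hpos : ∀ {κ : ℤ}, IsCoprime κ (2 * n : ℤ) → ∀ i, 0 < Int.fract ((κ : ℝ) * (a i / n)) := by
    intro κ hκ i
    refine lt_of_le_of_ne (Int.fract_nonneg _) fun h => ?_
    obtain ⟨r, hr⟩ := Int.fract_eq_zero_iff.1 h.symm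
    refine sin_ne_zero_of_coprime hn hκ (ha i) (han i) ?_
    rw [Real.sin_eq_zero_iff]
    refine ⟨r, ?_⟩
    rw [hr]
    push_cast
    ring
  have main := fun {κ : ℤ} (hκ : IsCoprime κ (2 * n : ℤ)) (hκN : Int.fract ((κ : ℝ) / N) < 1 / 2) =>
    conj_vertex_inequality hN hn hNn hP hB ha han hT hκ hκN j0
  simp only [Fin.sum_univ_three] at main
  set c : Fin 3 → ℕ := fun i => Nat.card {t // P t i = cV N j0} with hc
  have main' : ∀ {κ : ℤ}, IsCoprime κ (2 * n : ℤ) → Int.fract ((κ : ℝ) / N) < 1 / 2 →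
      (c 0 : ℝ) * Int.fract ((κ : ℝ) * (a 0 / n)) + c 1 * Int.fract ((κ : ℝ) * (a 1 / n))
        + c 2 * Int.fract ((κ : ℝ) * (a 2 / n)) ≤ 1 - 2 * Int.fract ((κ : ℝ) / N) := main
  have hgt' : 3 ≤ c 0 + c 1 + c 2 := by
    have : ¬ c 0 + c 1 + c 2 ≤ 2 := hgt
    omega
  -- the unconjugated inequality shows that some angle is missing at the vertex
  have hmiss : c 0 = 0 ∨ c 1 = 0 ∨ c 2 = 0 := by
    by_contra! h
    have hfN : Int.fract ((1 : ℤ) / N : ℝ) = 1 / N := by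
      rw [Int.cast_one, Int.fract_eq_self]
      exact ⟨by positivity, by rw [div_lt_one] <;> linarith⟩
    have hf : ∀ i, Int.fract (((1 : ℤ) : ℝ) * (a i / n)) = a i / n := by
      intro i
      have h1 : (0 : ℝ) < a i := by exact_mod_cast ha i
      have h2 : (a i : ℝ) < n := by exact_mod_cast han i
      rw [Int.cast_one, one_mul, Int.fract_eq_self]
      exact ⟨by positivity, by rwa [div_lt_one hn']⟩
    have h1 := main' (κ := 1) isCoprime_one_left (by
      rw [hfN, div_lt_div_iff₀] <;> linarith)
    rw [hf, hf, hf, hfN] at h1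
    have hx : ∀ i, (0 : ℝ) < a i / n := fun i => div_pos (by exact_mod_cast ha i) hn'
    have hs : (a 0 / n + a 1 / n + a 2 / n : ℝ) = 1 := by
      have : (a 0 + a 1 + a 2 : ℝ) = n := by exact_mod_cast hsum
      rw [← add_div, ← add_div, this, div_self hn'.ne']
    have g : ∀ i, c i ≠ 0 → (a i / n : ℝ) ≤ c i * (a i / n) := by
      intro i hi
      have : (1 : ℝ) ≤ c i := by exact_mod_cast Nat.one_le_iff_ne_zero.2 hi
      nlinarith [hx i]
    have := g 0 h.1
    have := g 1 h.2.1
    have := g 2 h.2.2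
    have : (0 : ℝ) < 1 / N := by positivity
    linarith
  have finish : ∀ i j k : Fin 3, c i + c j + c k = c 0 + c 1 + c 2 → 2 ≤ c i →
      (∀ x : Fin 3 → ℝ, c i * x i + c j * x j + c k * x k = c 0 * x 0 + c 1 * x 1 + c 2 * x 2) →
      False := by
    intro i j k h1 h2 h3
    refine arithmetic_contradiction hN hN6 hn hNn (x := a i / n) (w := a i) ?_ ?_ ?_
    · field_simp
    · intro z hz
      have h0 : (0 : ℝ) < a i / n := div_pos (by exact_mod_cast ha i) hn'
      have h4 : (a i / n : ℝ) < 1 := by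
        rw [div_lt_one hn']; exact_mod_cast han i
      rw [hz] at h0 h4
      have h5 : 0 < z := by exact_mod_cast h0
      have h6 : z < 1 := by exact_mod_cast h4
      omega
    · intro κ hκ hκN
      have hm := main' hκ hκN
      rw [← h3 fun i => Int.fract ((κ : ℝ) * (a i / n))] at hm
      have pi := hpos hκ i
      have pj := hpos hκ j
      have pk := hpos hκ k
      have hcj : (0 : ℝ) ≤ c j := Nat.cast_nonneg _
      have hck : (0 : ℝ) ≤ c k := Nat.cast_nonneg _
      rcases Nat.lt_or_ge 2 (c i) with h | h
      · have : (3 : ℝ) ≤ c i := by exact_mod_cast h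
        nlinarith [mul_nonneg hcj pj.le, mul_nonneg hck pk.le]
      · have hi : (2 : ℝ) ≤ c i := by exact_mod_cast h2
        have : 0 < c j ∨ 0 < c k := by omega
        rcases this with h | h
        · have : (0 : ℝ) < c j := by exact_mod_cast h
          nlinarith [mul_pos this pj, mul_nonneg hck pk.le]
        · have : (0 : ℝ) < c k := by exact_mod_cast h
          nlinarith [mul_nonneg hcj pj.le, mul_pos this pk]
  have : 2 ≤ c 0 ∨ 2 ≤ c 1 ∨ 2 ≤ c 2 := by omega
  rcases this with h | h | h
  · exact finish 0 1 2 rfl h fun x => rfl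
  · exact finish 1 0 2 (by ring) h fun x => by ring
  · exact finish 2 0 1 (by ring) h fun x => by ring

/-! ### Transfer to the complex plane -/

lemma rotate_eq {u v : ℂ} (h : cr u v ≠ 0) :
    v = (‖v‖ / ‖u‖ : ℝ) * (cs ((SignType.sign (cr u v) : ℝ) * InnerProductGeometry.angle u v) * u) := by
  have hu : u ≠ 0 := by rintro rfl; simp [cr] at h
  have hv : v ≠ 0 := by rintro rfl; simp [cr] at h
  have hn := Complex.normSq_pos.2 hu
  have harg : (SignType.sign (cr u v) : ℝ) * InnerProductGeometry.angle u v
      = Complex.arg (v / u) := by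
    rw [InnerProductGeometry.angle_comm, Complex.angle_eq_abs_arg hv hu]
    rcases lt_or_gt_of_ne h with h | h
    · have : Complex.arg (v / u) < 0 := by
        rw [Complex.arg_neg_iff, div_im_eq]
        exact div_neg_of_neg_of_pos h hn
      rw [sign_neg h, abs_of_neg this]
      simp
    · have : 0 ≤ Complex.arg (v / u) := by
        rw [Complex.arg_nonneg_iff, div_im_eq]
        exact (div_pos h hn).le
      rw [sign_pos h, abs_of_nonneg this]
      simp
  have h1 := Complex.norm_mul_exp_arg_mul_I (v / u)
  rw [harg, cs, ← norm_div, ← mul_assoc, h1]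
  field_simp

lemma cr_corner (P : Fin 3 → ℂ) (k : Fin 3) : cr (P (k + 1) - P k) (P (k + 2) - P k) = ar P := by
  have h := edge_cr P (k + 1)
  simp only [fin3_12, fin3_11, show k + 1 + 3 = k + 1 from fin3_3 _] at h
  rw [← neg_neg (ar P), ← h]
  simp only [cr, Complex.sub_re, Complex.sub_im]
  ring

/-- The identification of the Euclidean plane with the complex plane. -/
def toC : Pt ≃ₗᵢ[ℝ] ℂ := Complex.orthonormalBasisOneI.repr.symm

lemma toC_ngonVertex (N j : ℕ) : toC (ngonVertex N j) = cV N j := by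
  rw [toC, Complex.orthonormalBasisOneI_repr_symm_apply]
  have h0 : ngonVertex N j 0 = Real.cos (2 * π * j / N) := rfl
  have h1 : ngonVertex N j 1 = Real.sin (2 * π * j / N) := rfl
  rw [h0, h1, cV, cs, Complex.exp_mul_I, Complex.ofReal_cos, Complex.ofReal_sin]

lemma toC_ar_ne_zero {T : Fin 3 → Pt} (hT : AffineIndependent ℝ T) :
    ar (fun i => toC (T i)) ≠ 0 := by
  intro h
  have h10 : toC (T 1) - toC (T 0) ≠ 0 := by
    rw [sub_ne_zero]
    intro h
    have := hT.injective (toC.injective h)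
    simp at this
  obtain ⟨t, ht⟩ := exists_smul_of_cr_eq_zero h10 h
  rw [affineIndependent_iff_not_collinear] at hT
  apply hT
  rw [collinear_iff_of_mem (Set.mem_range_self (0 : Fin 3))]
  refine ⟨T 1 - T 0, ?_⟩
  rintro _ ⟨i, rfl⟩
  fin_cases i
  · exact ⟨0, by simp⟩
  · exact ⟨1, by simp⟩
  · refine ⟨t, ?_⟩
    apply toC.injective
    simp only [vadd_eq_add, map_add, map_smul, map_sub, Complex.real_smul]
    exact eq_add_of_sub_eq ht

lemma toC_tileAngles {T : Fin 3 → Pt} (hT : AffineIndependent ℝ T) {θ : Fin 3 → ℝ}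
    (hθ : ∀ i, angleAt T i = θ i) : TileAngles (fun i => toC (T i)) θ := by
  intro k
  have har := toC_ar_ne_zero hT
  have hcr := cr_corner (fun i => toC (T i)) k
  have h := rotate_eq (u := toC (T (k + 1)) - toC (T k)) (v := toC (T (k + 2)) - toC (T k))
    (by rw [hcr]; exact har)
  rw [hcr, ← map_sub, ← map_sub, ← LinearIsometryEquiv.coe_toLinearIsometry,
    LinearIsometry.angle_map, LinearIsometryEquiv.coe_toLinearIsometry, ← ori_real] at h
  have hang : InnerProductGeometry.angle (T (k + 1) - T k) (T (k + 2) - T k) = θ k := hθ k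
  rw [hang, map_sub, map_sub] at h
  refine ⟨_, ?_, h⟩
  have h1 : toC (T (k + 1)) - toC (T k) ≠ 0 := by
    intro h0
    apply har
    rw [← hcr]
    simp only [h0]
    simp [cr]
  have h2 : toC (T (k + 2)) - toC (T k) ≠ 0 := by
    intro h0
    apply har
    rw [← hcr]
    simp only [h0]
    simp [cr]
  exact div_pos (norm_pos_iff.2 h2) (norm_pos_iff.2 h1)

lemma toC_convexHull {ι : Type} (T : ι → Pt) :
    convexHull ℝ (Set.range fun i => toC (T i)) = toC '' convexHull ℝ (Set.range T) := by
  have := toC.toLinearEquiv.toLinearMap.image_convexHull (Set.range T)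
  rw [← Set.range_comp] at this
  exact this.symm

lemma toC_tiling {N m : ℕ} (hN : 3 ≤ N) {T : Fin m → Fin 3 → Pt} (h : IsTiling N T)
    {E : ℂ → ℂ → ℝ} (hE : LineAdd E) :
    ∑ t, (SignType.sign (ar fun i => toC (T t i)) : ℝ) * bd E (fun i => toC (T t i))
      = ∑ j ∈ Finset.range N, E (cV N j) (cV N (j + 1)) := by
  obtain ⟨haff, hdisj, hU⟩ := h
  refine tiling_boundary hN (P := fun t i => toC (T t i)) (fun t => toC_ar_ne_zero (haff t)) ?_ ?_ hE
  · intro t s hts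
    have himg : ∀ S : Set Pt, interior (toC '' S) = toC '' interior S := fun S =>
      (toC.toHomeomorph.image_interior S).symm
    simp only [toC_convexHull, himg]
    exact (Set.disjoint_image_iff toC.injective).2 (hdisj hts)
  · simp only [toC_convexHull, ← toC_ngonVertex, ← Set.image_iUnion]
    exact congrArg (Set.image toC) hU

/-- A common denominator for the angles. -/
lemma exists_common_denominator {N : ℕ} (hN : 3 ≤ N) {θ : Fin 3 → ℝ} (hθ : ∀ i, 0 < θ i)
    (hq : ∀ i, ∃ q : ℚ, θ i = q * π) :
    ∃ (n : ℕ) (a : Fin 3 → ℤ), n ≠ 0 ∧ 2 * N ∣ n ∧ (∀ i, 0 < a i) ∧ ∀ i, θ i = π * a i / n := by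
  choose q hq using hq
  have hd : ∀ i, (q i).den ≠ 0 := fun i => (q i).den_nz
  set D := ∏ i, (q i).den with hD
  have hD0 : D ≠ 0 := Finset.prod_ne_zero_iff.2 fun i _ => hd i
  have hn : 2 * N * D ≠ 0 := mul_ne_zero (by omega) hD0
  have hn' : (0 : ℝ) < (2 * N * D : ℕ) := by exact_mod_cast Nat.pos_of_ne_zero hn
  have hex : ∀ i, ∃ a : ℤ, θ i = π * a / (2 * N * D : ℕ) := by
    intro i
    obtain ⟨r, hr⟩ : (q i).den ∣ 2 * N * D :=
      (Finset.dvd_prod_of_mem _ (Finset.mem_univ i)).trans (dvd_mul_left D (2 * N))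
    refine ⟨(q i).num * r, ?_⟩
    rw [eq_div_iff hn'.ne', hq i, hr]
    have hden : ((q i).den : ℝ) ≠ 0 := by exact_mod_cast hd i
    have : (q i : ℝ) * (q i).den = (q i).num := by
      rw [Rat.cast_def]; field_simp
    push_cast
    linear_combination π * r * this
  choose a ha using hex
  refine ⟨2 * N * D, a, hn, dvd_mul_right _ _, fun i => ?_, ha⟩
  have h := hθ i
  rw [ha i] at h
  have h1 : 0 < π * a i := (div_pos_iff_of_pos_right hn').1 h
  exact_mod_cast (pos_iff_pos_of_mul_pos h1).1 Real.pi_pos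

/-- If `N ≥ 3`, `N ≠ 6`, and `R_N` is tiled by triangles all similar to a triangle whose
angles `α, β, γ` are rational multiples of `π`, then each angle of `R_N` is packed with at
most two tiles. -/
theorem statement1 (N : ℕ) (hN : 3 ≤ N) (hN6 : N ≠ 6)
    (α β γ : ℝ) (hα0 : 0 < α) (hβ0 : 0 < β) (hγ0 : 0 < γ) (hsum : α + β + γ = π)
    (hαq : ∃ q : ℚ, α = q * π) (hβq : ∃ q : ℚ, β = q * π) (hγq : ∃ q : ℚ, γ = q * π)
    {m : ℕ} (T : Fin m → Fin 3 → Pt) (htile : IsTiling N T)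
    (hang : ∀ t, HasAngles (T t) α β γ) :
    ∀ j : Fin N,
      countAt T 0 (ngonVertex N j) + countAt T 1 (ngonVertex N j)
        + countAt T 2 (ngonVertex N j) ≤ 2 := by
  intro j
  obtain ⟨n, a, hn, hNn, ha, hθ⟩ := exists_common_denominator hN (θ := ![α, β, γ])
    (by intro i; fin_cases i <;> assumption) (by intro i; fin_cases i <;> assumption)
  have hn' : (n : ℝ) ≠ 0 := by exact_mod_cast hn
  have hasum : a 0 + a 1 + a 2 = n := by
    have h0 : α = π * a 0 / n := hθ 0
    have h1 : β = π * a 1 / n := hθ 1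
    have h2 : γ = π * a 2 / n := hθ 2
    rw [h0, h1, h2] at hsum
    have hpi := Real.pi_ne_zero
    field_simp at hsum
    exact_mod_cast hsum
  have hT : ∀ t, TileAngles (fun i => toC (T t i)) (fun k => π * a k / n) := by
    intro t
    refine toC_tileAngles (htile.1 t) fun i => ?_
    rw [← hθ i]
    obtain ⟨h0, h1, h2⟩ := hang t
    fin_cases i <;> assumption
  have h := card_le_two hN hN6 hn hNn (P := fun t i => toC (T t i))
    (fun t => toC_ar_ne_zero (htile.1 t)) (fun E hE => toC_tiling hN htile hE) ha hasum hT j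
  simp only [← toC_ngonVertex, toC.injective.eq_iff] at h
  exact h

end
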